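/- arXiv:1908.04375 — 6 statements merged into one kernel-verified Lean document; each statement's English description precedes it below -/
import Mathlib

section
/- Let κ be a regular uncountable cardinal. The following are equivalent: (i) the tree property TP(κ) holds; (ii) for every F : κ × κ → κ with the property that whenever β < γ < δ < κ and F(β,γ) = F(β,δ), then F(α,γ) = F(α,δ) for all α < β, there is a set A ⊆ κ of cardinality κ such that either F(β,γ) ≠ F(β,δ) whenever β < γ < δ are in A, or F(β,γ) = F(β,δ) whenever β < γ < δ are in A. -/
/-! The key reformulation is that a set of ordinals below a regular `κ` has size `κ` exactly when it
is unbounded in `κ` (`mk_eq_iff_unbounded`).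

From the tree property to the coloring property. The functions `F(·, γ)` restricted to `β ≤ γ` form
a tree under end-extension; each node is represented by the least `γ ≥ β` producing it, so level `β`
is the set `minReps κ F β`. If some level has size `κ`, that set of representatives is itself a
set on which `F(β', ·)` is injective, since `F(β', γ) = F(β', δ)` would force `γ` and `δ` to
represent the same node of level `β ≤ β'`. Otherwise the tree is a `κ`-tree, and a branch is a
function `g` with `β ≤ g β` such that `F(α, g β)` does not depend on `β > α`. Thinning out the
range of `g` to a set in which `g β < g β'` implies `g β < β'` gives a set on
which `F(β, ·)` is constant (`exists_homogeneous_of_coherent`).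

From the coloring property to the tree property. Pick a node `t γ` on each level `γ`, and let
`F(β, γ)` name the predecessor of `t γ` on level `β`; the name used is the least `γ' > β` for which
`t γ'` has that same predecessor. A set on which all `F(β, ·)` are injective would make the
levels indexed by its elements have size `κ`, so there is a set `A` of size `κ` on which all `F(β, ·)` are
constant, and the predecessors on level `α` of the nodes `t γ`, for `γ ∈ A` with another element of
`A` in `[α, γ)`, form a `κ`-branch. -/

set_option autoImplicit false

noncomputable section

open Cardinal Set

universe u

/-- `P_κ(λ)`: the collection of subsets of (the set of ordinals below) `λ`
of cardinality `< κ`. -/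
def Pkl (κ lam : Cardinal.{0}) : Set (Set Ordinal.{0}) :=
  {a | a ⊆ Set.Iio lam.ord ∧ #a < Cardinal.lift.{1} κ}

/-- `J` is an ideal on the set `X`. -/
structure IsIdealOn {α : Type u} (J : Set (Set α)) (X : Set α) : Prop where
  empty_mem : ∅ ∈ J
  subset_ground : ∀ A ∈ J, A ⊆ X
  union_mem : ∀ A ∈ J, ∀ B ∈ J, A ∪ B ∈ J
  mem_of_subset : ∀ A ∈ J, ∀ B, B ⊆ A → B ∈ J
  ground_not_mem : X ∉ J

/-- `J⁺`: the `J`-positive subsets of the ground set `X`. -/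
def plusOf {α : Type u} (J : Set (Set α)) (X : Set α) : Set (Set α) :=
  {A | A ⊆ X ∧ A ∉ J}

/-- The restriction `J | A` of an ideal `J` with ground set `X`. -/
def restr {α : Type u} (J : Set (Set α)) (X A : Set α) : Set (Set α) :=
  {B | B ⊆ X ∧ B ∩ A ∈ J}

/-- The ideal `I_{κ,λ}` of noncofinal subsets of `P_κ(λ)`. -/
def Ikl (κ lam : Cardinal.{0}) : Set (Set (Set Ordinal.{0})) :=
  {B | B ⊆ Pkl κ lam ∧ ∃ a ∈ Pkl κ lam, ∀ b ∈ B, ¬a ⊆ b}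

/-- `Q` is a partition of `X`. -/
def IsPartitionOf {α : Type u} (Q : Set (Set α)) (X : Set α) : Prop :=
  (∀ A ∈ Q, A.Nonempty) ∧ (∀ A ∈ Q, A ⊆ X) ∧
    (∀ A ∈ Q, ∀ B ∈ Q, A ≠ B → A ∩ B = ∅) ∧ ⋃₀ Q = X

/-- The piece selection principle `PS⁺(τ, κ, λ)`. -/
def PSPlus (τ κ lam : Cardinal.{0}) : Prop :=
  ∀ Q : Set Ordinal.{0} → Set (Set (Set Ordinal.{0})),
    (∀ a ∈ Pkl κ lam, IsPartitionOf (Q a) (Pkl κ lam) ∧ #(Q a) < Cardinal.lift.{1} τ) →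
    ∃ B ∈ plusOf (Ikl κ lam) (Pkl κ lam), ∃ h : Set Ordinal.{0} → Set (Set Ordinal.{0}),
      (∀ a ∈ Pkl κ lam, h a ∈ Q a) ∧
      ∀ a ∈ B, ∀ b ∈ B, ∃ c, c ∈ h a ∧ c ∈ h b ∧ a ∪ b ⊆ c

/-- The piece selection principle `PS⋆(τ, κ, λ)`. -/
def PSStar (τ κ lam : Cardinal.{0}) : Prop :=
  ∀ Q : Set Ordinal.{0} → Set (Set (Set Ordinal.{0})),
    (∀ a ∈ Pkl κ lam, IsPartitionOf (Q a) (Pkl κ lam) ∧ #(Q a) < Cardinal.lift.{1} τ) →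
    ∃ B ∈ plusOf (Ikl κ lam) (Pkl κ lam), ∃ h : Set Ordinal.{0} → Set (Set Ordinal.{0}),
      (∀ a ∈ Pkl κ lam, h a ∈ Q a) ∧
      ∀ a ∈ B, ∀ b ∈ B, ∃ t ∈ B, a ∪ b ⊆ t ∧
        (∃ c, c ∈ h a ∧ c ∈ h t ∧ t ⊆ c) ∧ ∃ d, d ∈ h b ∧ d ∈ h t ∧ t ⊆ d

/-- The piece selection principle `PS(τ, κ, λ)`. -/
def PSpr (τ κ lam : Cardinal.{0}) : Prop :=
  ∀ Q : Set Ordinal.{0} → Set (Set (Set Ordinal.{0})),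
    (∀ a ∈ Pkl κ lam, IsPartitionOf (Q a) (Pkl κ lam) ∧ #(Q a) < Cardinal.lift.{1} τ) →
    ∃ B ∈ plusOf (Ikl κ lam) (Pkl κ lam), ∃ h : Set Ordinal.{0} → Set (Set Ordinal.{0}),
      (∀ a ∈ Pkl κ lam, h a ∈ Q a) ∧
      ∀ a ∈ B, ∀ b ∈ B, ∃ t ∈ Pkl κ lam, a ∪ b ⊆ t ∧
        (∃ c, c ∈ h a ∧ c ∈ h t ∧ t ⊆ c) ∧ ∃ d, d ∈ h b ∧ d ∈ h t ∧ t ⊆ d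

/-- The one-cardinal piece selection principle `PS⁺(τ, μ)`. -/
def PSPlusOne (τ μ : Cardinal.{0}) : Prop :=
  ∀ Q : Ordinal.{0} → Set (Set Ordinal.{0}),
    (∀ β < μ.ord, IsPartitionOf (Q β) (Set.Ico β μ.ord) ∧ #(Q β) < Cardinal.lift.{1} τ) →
    ∃ B : Set Ordinal.{0}, B ⊆ Set.Iio μ.ord ∧ (∀ γ < μ.ord, ∃ β ∈ B, γ ≤ β) ∧
      ∃ h : Ordinal.{0} → Set Ordinal.{0}, (∀ β ∈ B, h β ∈ Q β) ∧
        ∀ α ∈ B, ∀ β ∈ B, (h α ∩ h β).Nonempty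

/-- `X` is closed below `δ`: every ordinal `< δ` which is a limit of elements
of `X` belongs to `X`. -/
def IsClosedBelow (X : Set Ordinal.{0}) (δ : Ordinal.{0}) : Prop :=
  ∀ β < δ, 0 < β → (∀ γ < β, ∃ ξ ∈ X, γ < ξ ∧ ξ < β) → β ∈ X

/-- `X` is a closed unbounded subset of `δ`. -/
def IsClubBelow (X : Set Ordinal.{0}) (δ : Ordinal.{0}) : Prop :=
  X ⊆ Set.Iio δ ∧ (∀ γ < δ, ∃ ξ ∈ X, γ ≤ ξ) ∧ IsClosedBelow X δ

/-- `δ` is a remarkably good point for the sequence `f` with respect to the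
set of regular cardinals `A` and the ideal `I` on `A`. -/
def RemGoodPoint (A : Set Cardinal.{0}) (I : Set (Set Cardinal.{0}))
    (f : Ordinal.{0} → Cardinal.{0} → Ordinal.{0}) (δ : Ordinal.{0}) : Prop :=
  ∃ X : Set Ordinal.{0}, IsClubBelow X δ ∧
    ∃ Z : Ordinal.{0} → Set Cardinal.{0}, (∀ ξ ∈ X, Z ξ ∈ I) ∧
      ∀ β ∈ X, ∀ ξ ∈ X, β < ξ → ∀ a ∈ A, a ∉ Z β → a ∉ Z ξ → f β a < f ξ a

/-- `sup (a ∩ κ)`. -/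
def supk (κ : Cardinal.{0}) (a : Set Ordinal.{0}) : Ordinal.{0} :=
  sSup (a ∩ Set.Iio κ.ord)

/-- Shelah's covering number `cov(ρ₁, ρ₂, ρ₃, ρ₄)`. -/
def covNum (ρ₁ ρ₂ ρ₃ ρ₄ : Cardinal.{0}) : Cardinal.{1} :=
  sInf {c : Cardinal.{1} | ∃ X : Set (Set Ordinal.{0}), c = #X ∧
    (∀ y ∈ X, y ⊆ Set.Iio ρ₁.ord ∧ #y < Cardinal.lift.{1} ρ₂) ∧
    ∀ a : Set Ordinal.{0}, a ⊆ Set.Iio ρ₁.ord → #a < Cardinal.lift.{1} ρ₃ →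
      ∃ Q, Q ⊆ X ∧ #Q < Cardinal.lift.{1} ρ₄ ∧ a ⊆ ⋃₀ Q}

/-- `κ` is mildly `λ`-ineffable. -/
def MildlyIneffable (κ lam : Cardinal.{0}) : Prop :=
  ∀ s : Set Ordinal.{0} → Set Ordinal.{0}, (∀ a ∈ Pkl κ lam, s a ⊆ a) →
    ∃ S : Set Ordinal.{0}, S ⊆ Set.Iio lam.ord ∧
      ∀ b ∈ Pkl κ lam, ∃ a ∈ Pkl κ lam, b ⊆ a ∧ S ∩ b = s a ∩ b

/-- `Q` is a maximal `J`-almost disjoint family of `J`-positive sets. -/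
def MADOn {α : Type u} (J : Set (Set α)) (X : Set α) (Q : Set (Set α)) : Prop :=
  Q ⊆ plusOf J X ∧ (∀ A ∈ Q, ∀ B ∈ Q, A ≠ B → A ∩ B ∈ J) ∧
    ∀ C ∈ plusOf J X, ∃ A ∈ Q, A ∩ C ∉ J

/-- `Q` is a maximal disjoint family of `J`-positive sets. -/
def MADdOn {α : Type u} (J : Set (Set α)) (X : Set α) (Q : Set (Set α)) : Prop :=
  Q ⊆ plusOf J X ∧ (∀ A ∈ Q, ∀ B ∈ Q, A ≠ B → A ∩ B = ∅) ∧
    ∀ C ∈ plusOf J X, ∃ A ∈ Q, A ∩ C ∉ J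

/-- `(ρ, ν)`-distributivity of an ideal `J` on `P_κ(λ)`. -/
def DistrPkl (κ lam : Cardinal.{0}) (J : Set (Set (Set Ordinal.{0})))
    (ρ ν : Cardinal.{0}) : Prop :=
  ∀ A ∈ plusOf J (Pkl κ lam), ∀ Q : Ordinal.{0} → Set (Set (Set Ordinal.{0})),
    (∀ i, i < ρ.ord → MADOn J (Pkl κ lam) (Q i) ∧ #(Q i) ≤ Cardinal.lift.{1} ν) →
    ∃ B ∈ plusOf J (Pkl κ lam), B ⊆ A ∧
      ∃ h : Ordinal.{0} → Set (Set Ordinal.{0}),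
        (∀ i, i < ρ.ord → h i ∈ Q i) ∧ ∀ i, i < ρ.ord → B \ h i ∈ J

/-- Disjoint `(ρ, ν)`-distributivity of an ideal `J` on `P_κ(λ)`. -/
def DisjDistrPkl (κ lam : Cardinal.{0}) (J : Set (Set (Set Ordinal.{0})))
    (ρ ν : Cardinal.{0}) : Prop :=
  ∀ A ∈ plusOf J (Pkl κ lam), ∀ Q : Ordinal.{0} → Set (Set (Set Ordinal.{0})),
    (∀ i, i < ρ.ord → MADdOn J (Pkl κ lam) (Q i) ∧ #(Q i) ≤ Cardinal.lift.{1} ν) →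
    ∃ B ∈ plusOf J (Pkl κ lam), B ⊆ A ∧
      ∃ h : Ordinal.{0} → Set (Set Ordinal.{0}),
        (∀ i, i < ρ.ord → h i ∈ Q i) ∧ ∀ i, i < ρ.ord → B \ h i ∈ J

/-- Generic `(ρ, ν)`-distributivity of an ideal `J` on a set `X`. -/
def DistrU {α : Type u} (J : Set (Set α)) (X : Set α) (ρ ν : Cardinal.{u}) : Prop :=
  ∀ A ∈ plusOf J X, ∀ Q : Ordinal.{u} → Set (Set α),
    (∀ i, i < ρ.ord → MADOn J X (Q i) ∧ #(Q i) ≤ ν) →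
    ∃ B ∈ plusOf J X, B ⊆ A ∧
      ∃ h : Ordinal.{u} → Set α,
        (∀ i, i < ρ.ord → h i ∈ Q i) ∧ ∀ i, i < ρ.ord → B \ h i ∈ J

/-- `J` is `κ`-complete. -/
def KappaComplete (κ : Cardinal.{0}) (J : Set (Set (Set Ordinal.{0}))) : Prop :=
  ∀ Z : Set (Set (Set Ordinal.{0})), Z ⊆ J → #Z < Cardinal.lift.{1} κ → ⋃₀ Z ∈ J

/-- `J⁺ → (J⁺, ρ)²` relative to `J` (unbalanced partition relation on pairs
from `P_κ(λ)`). -/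
def ArrowPairOrd (κ lam : Cardinal.{0}) (J : Set (Set (Set Ordinal.{0})))
    (ρ : Cardinal.{0}) : Prop :=
  ∀ F : Set Ordinal.{0} → Set Ordinal.{0} → Fin 2, ∀ A ∈ plusOf J (Pkl κ lam),
    (∃ B ∈ plusOf J (Pkl κ lam), B ⊆ A ∧ ∀ a ∈ B, {b | b ∈ B ∧ F a b ≠ 0} ∈ J) ∨
    (∃ c : Ordinal.{0} → Set Ordinal.{0}, (∀ i, i < ρ.ord → c i ∈ A) ∧
      (∀ i j, i < j → j < ρ.ord → c i ⊂ c j) ∧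
      ∀ i j, i < j → j < ρ.ord → F (c i) (c j) = 1)

/-- `X →_κ^J (J⁺, ρ)²` (unbalanced partition relation on `κ × P_κ(λ)`). -/
def ArrowKappaPair (κ lam : Cardinal.{0}) (J : Set (Set (Set Ordinal.{0})))
    (X : Set (Set (Set Ordinal.{0}))) (ρ : Cardinal.{0}) : Prop :=
  ∀ F : Ordinal.{0} → Set Ordinal.{0} → Fin 2, ∀ A ∈ X,
    (∃ B ∈ plusOf J (Pkl κ lam), B ⊆ A ∧
      ∀ a ∈ B, {b | b ∈ B ∧ F (supk κ a) b ≠ 0} ∈ J) ∨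
    (∃ c : Ordinal.{0} → Set Ordinal.{0}, (∀ i, i < ρ.ord → c i ∈ A) ∧
      (∀ i j, i < j → j < ρ.ord → c i ⊂ c j) ∧
      ∀ i j, i < j → j < ρ.ord → F (supk κ (c i)) (c j) = 1)

/-- `{P_κ(λ)} →_J (J⁺)²_ρ` (balanced partition relation with `ρ` colors). -/
def BalArrowAll (κ lam : Cardinal.{0}) (J : Set (Set (Set Ordinal.{0})))
    (ρ : Cardinal.{0}) : Prop :=
  ∀ F : Set Ordinal.{0} → Set Ordinal.{0} → Ordinal.{0}, (∀ a b, F a b < ρ.ord) →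
    ∃ i, i < ρ.ord ∧ ∃ B ∈ plusOf J (Pkl κ lam),
      ∃ Z : Set Ordinal.{0} → Set (Set Ordinal.{0}), (∀ a ∈ B, Z a ∈ J) ∧
        ∀ a ∈ B, ∀ b ∈ B, b ∉ Z a → F a b = i

/-- `J⁺ →_J (J⁺)²_ω` (balanced partition relation with `ω` colors). -/
def ArrowOmegaColors (κ lam : Cardinal.{0}) (J : Set (Set (Set Ordinal.{0}))) : Prop :=
  ∀ F : Set Ordinal.{0} → Set Ordinal.{0} → ℕ, ∀ A ∈ plusOf J (Pkl κ lam),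
    ∃ i : ℕ, ∃ B ∈ plusOf J (Pkl κ lam), B ⊆ A ∧
      ∃ Z : Set Ordinal.{0} → Set (Set Ordinal.{0}), (∀ a ∈ B, Z a ∈ J) ∧
        ∀ a ∈ B, ∀ b ∈ B, b ∉ Z a → F a b = i

/-- `J⁺ →_J (J⁺)ⁿ_ρ` (balanced partition relation on `n`-tuples with `ρ` colors). -/
def ArrowN (κ lam : Cardinal.{0}) (J : Set (Set (Set Ordinal.{0}))) (n : ℕ)
    (ρ : Cardinal.{0}) : Prop :=
  ∀ F : (Fin n → Set Ordinal.{0}) → Ordinal.{0}, (∀ s, F s < ρ.ord) →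
    ∀ A ∈ plusOf J (Pkl κ lam),
      ∃ i, i < ρ.ord ∧ ∃ B ∈ plusOf J (Pkl κ lam), B ⊆ A ∧
        ∃ Z : Set Ordinal.{0} → Set (Set Ordinal.{0}), (∀ a ∈ B, Z a ∈ J) ∧
          ∀ s : Fin n → Set Ordinal.{0}, (∀ m, s m ∈ B) →
            (∀ m k : Fin n, k < m → s m ∉ Z (s k)) → F s = i

/-- The projected ideal `J ↾ κ` on `κ`. -/
def restrK (κ lam : Cardinal.{0}) (J : Set (Set (Set Ordinal.{0}))) :
    Set (Set Ordinal.{0}) :=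
  {X | X ⊆ Set.Iio κ.ord ∧ {a | a ∈ Pkl κ lam ∧ supk κ a ∈ X} ∈ J}

/-- `J` is a weak `π`-point. -/
def WeakPiPoint (κ lam : Cardinal.{0}) (J : Set (Set (Set Ordinal.{0}))) : Prop :=
  ∀ A ∈ plusOf J (Pkl κ lam), ∀ f : Ordinal.{0} → Set (Set Ordinal.{0}),
    (∀ α, α < κ.ord → f α ∈ J) →
    ∃ B ∈ plusOf J (Pkl κ lam), B ⊆ A ∧ ∀ α, α < κ.ord → B ∩ f α ∈ Ikl κ lam

/-- `J` is a weak `χ`-point. -/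
def WeakChiPoint (κ lam : Cardinal.{0}) (J : Set (Set (Set Ordinal.{0}))) : Prop :=
  ∀ A ∈ plusOf J (Pkl κ lam), ∀ g : Ordinal.{0} → Set Ordinal.{0},
    (∀ α, α < κ.ord → g α ∈ Pkl κ lam) →
    ∃ B ∈ plusOf J (Pkl κ lam), B ⊆ A ∧
      ∀ a ∈ B, ∀ b ∈ B, supk κ a < supk κ b → g (supk κ a) ⊆ b

/-- `C` is a closed unbounded subset of `P_κ(λ)`. -/
def IsClubPkl (κ lam : Cardinal.{0}) (C : Set (Set Ordinal.{0})) : Prop :=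
  C ⊆ Pkl κ lam ∧ (∀ a ∈ Pkl κ lam, ∃ b ∈ C, a ⊆ b) ∧
    ∀ β : Ordinal.{0}, 0 < β → β < κ.ord →
      ∀ f : Ordinal.{0} → Set Ordinal.{0},
        (∀ i, i < β → f i ∈ C) → (∀ i j, i ≤ j → j < β → f i ⊆ f j) →
        (⋃ i ∈ Set.Iio β, f i) ∈ C

/-- The set `S^λ_{κ,λ} = {a ∈ P_κ(λ) : |a| = |a ∩ κ|}`. -/
def Slamset (κ lam : Cardinal.{0}) : Set (Set Ordinal.{0}) :=
  {a | a ∈ Pkl κ lam ∧ #a = #((a ∩ Set.Iio κ.ord : Set Ordinal.{0}))}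

/-- The ideal `I_κ` of bounded subsets of `κ`. -/
def Ibd (κ : Cardinal.{0}) : Set (Set Ordinal.{0}) :=
  {X | X ⊆ Set.Iio κ.ord ∧ ∃ α, α < κ.ord ∧ X ⊆ Set.Iio α}

/-- The ideal extension principle `IE(τ, κ, I_κ)`. -/
def IEkappa (τ κ : Cardinal.{0}) : Prop :=
  ∀ Q : Ordinal.{0} → Set (Set Ordinal.{0}),
    (∀ α < κ.ord, IsPartitionOf (Q α) (Set.Ico α κ.ord) ∧ #(Q α) < Cardinal.lift.{1} τ) →
    ∃ h : Ordinal.{0} → Set Ordinal.{0}, (∀ α < κ.ord, h α ∈ Q α) ∧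
      ∃ K : Set (Set Ordinal.{0}), IsIdealOn K (Set.Iio κ.ord) ∧ Ibd κ ⊆ K ∧
        ∀ α < κ.ord, Set.Iio κ.ord \ h α ∈ K

/-- The transversal property `PT(κ, τ)`. -/
def PT (κ τ : Cardinal.{0}) : Prop :=
  ∀ X : Ordinal.{0} → Set Ordinal.{0},
    (∀ α, α < κ.ord → #(X α) < Cardinal.lift.{1} τ) →
    (¬∃ g : Ordinal.{0} → Ordinal.{0}, (∀ α, α < κ.ord → g α ∈ X α) ∧
        Set.InjOn g (Set.Iio κ.ord)) →
    ∃ b : Set Ordinal.{0}, b ⊆ Set.Iio κ.ord ∧ #b < Cardinal.lift.{1} κ ∧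
      ¬∃ g : Ordinal.{0} → Ordinal.{0}, (∀ α ∈ b, g α ∈ X α) ∧ Set.InjOn g b

/-- `(T, lt)` is a tree whose height function is `ht` : the predecessors of
any node `t` are well-ordered by `lt`, in order type `ht t`. -/
def IsTreeWithHeight (T : Type) (lt : T → T → Prop) (ht : T → Ordinal.{0}) : Prop :=
  (∀ t, ¬lt t t) ∧ (∀ r s t, lt r s → lt s t → lt r t) ∧
    (∀ s t, lt s t → ht s < ht t) ∧
    (∀ t, ∀ α, α < ht t → ∃ s, lt s t ∧ ht s = α) ∧
    (∀ s₁ s₂ t, lt s₁ t → lt s₂ t → ht s₁ = ht s₂ → s₁ = s₂) ∧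
    (∀ s₁ s₂ t, lt s₁ t → lt s₂ t → ht s₁ < ht s₂ → lt s₁ s₂)

/-- The tree property `TP(κ)` : every tree of height `κ` whose levels have
size `< κ` has a `κ`-branch. -/
def TP (κ : Cardinal.{0}) : Prop :=
  ∀ (T : Type) (lt : T → T → Prop) (ht : T → Ordinal.{0}),
    IsTreeWithHeight T lt ht →
    (∀ t, ht t < κ.ord) →
    (∀ α < κ.ord, ∃ t, ht t = α) →
    (∀ α : Ordinal.{0}, #{t : T // ht t = α} < κ) →
    ∃ B : Set T, (∀ s ∈ B, ∀ t ∈ B, s ≠ t → lt s t ∨ lt t s) ∧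
      ∀ α < κ.ord, ∃ t ∈ B, ht t = α


/-- Below a regular cardinal, having full size is the same as being unbounded. -/
lemma mk_eq_iff_unbounded {κ : Cardinal.{0}} (hreg : κ.IsRegular) {A : Set Ordinal.{0}}
    (hA : A ⊆ Set.Iio κ.ord) :
    #A = Cardinal.lift.{1} κ ↔ ∀ α < κ.ord, ∃ γ ∈ A, α < γ := by
  constructor
  · intro h α hα
    by_contra! hcon
    have hsub : A ⊆ Set.Iio (Order.succ α) := fun γ hγ => Order.lt_succ_iff.2 (hcon γ hγ)
    have h1 := Cardinal.mk_le_mk_of_subset hsub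
    rw [Cardinal.mk_Iio_ordinal, h, Cardinal.lift_le] at h1
    have h2 : Order.succ α < κ.ord := (Cardinal.isSuccLimit_ord hreg.aleph0_le).succ_lt hα
    exact absurd (Cardinal.lt_ord.1 h2) (not_lt.2 h1)
  · intro h
    apply le_antisymm
    · have h1 := Cardinal.mk_le_mk_of_subset hA
      rwa [Cardinal.mk_Iio_ordinal, Cardinal.card_ord] at h1
    · by_contra! hlt
      have h1 : sSup A < κ.ord := by
        apply Ordinal.sSup_lt_of_lt_cof _ (fun i hi => hA hi)
        rwa [← Ordinal.lift_cof, hreg.cof_ord]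
      obtain ⟨γ, hγ, hlt'⟩ := h _ h1
      exact absurd (le_csSup ⟨κ.ord, fun x hx => (hA hx).le⟩ hγ) (not_le.2 hlt')

/-- The least representatives `γ ≥ β` of the functions `F(·, γ)` restricted to `β`; they stand for
the nodes on level `β` of the tree of initial segments of the functions `F(·, γ)`. -/
def minReps (κ : Cardinal.{0}) (F : Ordinal.{0} → Ordinal.{0} → Ordinal.{0}) (β : Ordinal.{0}) :
    Set Ordinal.{0} :=
  {γ | β ≤ γ ∧ γ < κ.ord ∧ ∀ γ', β ≤ γ' → (∀ ξ < β, F ξ γ' = F ξ γ) → γ ≤ γ'}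

lemma exists_minRep {κ : Cardinal.{0}} (F : Ordinal.{0} → Ordinal.{0} → Ordinal.{0})
    {β γ : Ordinal.{0}} (h : β ≤ γ) (hγ : γ < κ.ord) :
    ∃ δ ∈ minReps κ F β, ∀ ξ < β, F ξ δ = F ξ γ := by
  let S : Set Ordinal.{0} := {δ | β ≤ δ ∧ ∀ ξ < β, F ξ δ = F ξ γ}
  have hγS : γ ∈ S := ⟨h, fun _ _ => rfl⟩
  have hm : sInf S ∈ S := csInf_mem ⟨γ, hγS⟩
  refine ⟨sInf S, ⟨hm.1, (csInf_le' hγS).trans_lt hγ, fun γ' h1 h2 => ?_⟩, hm.2⟩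
  exact csInf_le' ⟨h1, fun ξ hξ => (h2 ξ hξ).trans (hm.2 ξ hξ)⟩

/-- A branch `g` through the tree of initial segments yields a set of size `κ` on which every
`F(β, ·)` is constant. -/
lemma exists_homogeneous_of_coherent {κ : Cardinal.{0}} (hreg : κ.IsRegular)
    (F : Ordinal.{0} → Ordinal.{0} → Ordinal.{0}) (g : Ordinal.{0} → Ordinal.{0})
    (hge : ∀ β < κ.ord, β ≤ g β) (hlt : ∀ β < κ.ord, g β < κ.ord)
    (hcoh : ∀ β β', β < β' → β' < κ.ord → ∀ α < β, F α (g β) = F α (g β')) :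
    ∃ A : Set Ordinal.{0}, A ⊆ Set.Iio κ.ord ∧ #A = Cardinal.lift.{1} κ ∧
      ∀ β ∈ A, ∀ γ ∈ A, ∀ δ ∈ A, β < γ → γ < δ → F β γ = F β δ := by
  let r : Set.Iio κ.ord → Set.Iio κ.ord → Prop := fun β β' => g β < β'
  obtain ⟨hC, hmax⟩ := maxChain_spec (r := r)
  set C := maxChain r
  refine ⟨(fun β : Set.Iio κ.ord => g β) '' C, ?_, ?_, ?_⟩
  · rintro _ ⟨β, -, rfl⟩
    exact hlt β β.2
  · rw [mk_eq_iff_unbounded hreg (by rintro _ ⟨β, -, rfl⟩; exact hlt β β.2)]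
    intro α hα
    by_contra! hcon
    -- If `α` bounded the image of the maximal chain, `α + 1` could be appended to the chain.
    have hs : Order.succ α < κ.ord := (Cardinal.isSuccLimit_ord hreg.aleph0_le).succ_lt hα
    have hins : IsChain r (insert ⟨Order.succ α, hs⟩ C) :=
      hC.insert fun b hb _ => Or.inr (Order.lt_succ_iff.2 (hcon _ ⟨b, hb, rfl⟩))
    have hmem : (⟨Order.succ α, hs⟩ : Set.Iio κ.ord) ∈ C := by
      rw [hmax hins (Set.subset_insert _ _)]
      exact Set.mem_insert _ _
    have h1 := hcon _ ⟨_, hmem, rfl⟩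
    exact absurd ((hge _ hs).trans h1) (not_le.2 (Order.lt_succ α))
  · have key : ∀ a ∈ C, ∀ b ∈ C, g a < g b → g a < (b : Ordinal.{0}) := by
      intro a ha b hb hab
      have hne : a ≠ b := by rintro rfl; exact lt_irrefl _ hab
      rcases hC ha hb hne with h | h
      · exact h
      · exact absurd (h.trans_le (hge a a.2)) (not_lt.2 hab.le)
    rintro _ ⟨a, ha, rfl⟩ _ ⟨b, hb, rfl⟩ _ ⟨c, hc, rfl⟩ hab hbc
    have h1 := key a ha b hb hab
    have h2 := key b hb c hc hbc
    exact hcoh b c ((hge b b.2).trans_lt h2) c.2 _ h1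

lemma coloring_of_treeProperty {κ : Cardinal.{0}} (hreg : κ.IsRegular) (hTP : TP κ)
    (F : Ordinal.{0} → Ordinal.{0} → Ordinal.{0})
    (hF : ∀ β γ δ, β < γ → γ < δ → δ < κ.ord → F β γ = F β δ → ∀ α, α < β → F α γ = F α δ) :
    ∃ A : Set Ordinal.{0}, A ⊆ Set.Iio κ.ord ∧ #A = Cardinal.lift.{1} κ ∧
      ((∀ β ∈ A, ∀ γ ∈ A, ∀ δ ∈ A, β < γ → γ < δ → F β γ ≠ F β δ) ∨
        (∀ β ∈ A, ∀ γ ∈ A, ∀ δ ∈ A, β < γ → γ < δ → F β γ = F β δ)) := by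
  have hsub : ∀ β, minReps κ F β ⊆ Set.Iio κ.ord := fun β γ hγ => hγ.2.1
  have hle : ∀ β, #(minReps κ F β) ≤ Cardinal.lift.{1} κ := fun β => by
    have h1 := Cardinal.mk_le_mk_of_subset (hsub β)
    rwa [Cardinal.mk_Iio_ordinal, Cardinal.card_ord] at h1
  by_cases hbig : ∃ β, #(minReps κ F β) = Cardinal.lift.{1} κ
  · obtain ⟨β, hβ⟩ := hbig
    refine ⟨_, hsub β, hβ, Or.inl ?_⟩
    intro β' hβ' γ hγ δ hδ h1 h2 heq
    have h3 := hF β' γ δ h1 h2 hδ.2.1 heq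
    exact absurd (hδ.2.2 γ hγ.1 fun ξ hξ => h3 ξ (hξ.trans_le hβ'.1)) (not_le.2 h2)
  push Not at hbig
  have hsmall : ∀ β, #(minReps κ F β) < Cardinal.lift.{1} κ :=
    fun β => lt_of_le_of_ne (hle β) (hbig β)
  let N := {p : Ordinal.{0} × Ordinal.{0} // p.2 ∈ minReps κ F p.1}
  have hN1 : ∀ p : N, p.1.1 < κ.ord := fun p => p.2.1.trans_lt p.2.2.1
  -- The tree property quantifies over trees in the lowest universe.
  have hNs : Small.{0} N := by
    refine small_of_injective (β := Set.Iio κ.ord × Set.Iio κ.ord)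
      (f := fun p => (⟨p.1.1, hN1 p⟩, ⟨p.1.2, p.2.2.1⟩)) ?_
    rintro ⟨⟨a, b⟩, _⟩ ⟨⟨c, d⟩, _⟩ h
    exact Subtype.ext (Prod.ext (congrArg (fun x => x.1.1) h) (congrArg (fun x => x.2.1) h))
  obtain ⟨T, ⟨e⟩⟩ := hNs
  have hex : ∀ p : N, ∃ t, e.symm t = p := fun p => ⟨e p, e.symm_apply_apply p⟩
  have hbranch := hTP T
    (fun s t => (e.symm s).1.1 < (e.symm t).1.1 ∧
      ∀ ξ < (e.symm s).1.1, F ξ (e.symm s).1.2 = F ξ (e.symm t).1.2)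
    (fun t => (e.symm t).1.1) ?_ (fun t => hN1 _) ?_ ?_
  · obtain ⟨B, hB1, hB2⟩ := hbranch
    obtain ⟨s₀, -⟩ := hB2 0 hreg.ord_pos
    have : Nonempty T := ⟨s₀⟩
    choose! n hnB hn using hB2
    refine (exists_homogeneous_of_coherent hreg F (fun β => (e.symm (n β)).1.2)
      ?_ (fun β _ => (e.symm (n β)).2.2.1) ?_).imp fun A hA => ⟨hA.1, hA.2.1, Or.inr hA.2.2⟩
    · intro β hβ
      have := (e.symm (n β)).2.1
      rwa [hn β hβ] at this
    · intro β β' hlt hβ' α hα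
      have hβ := hlt.trans hβ'
      have hne : n β ≠ n β' := fun h => by
        have h1 := hn β hβ
        rw [h, hn β' hβ'] at h1
        exact hlt.ne' h1
      rcases hB1 _ (hnB β hβ) _ (hnB β' hβ') hne with h | h
      · exact h.2 α (by rwa [hn β hβ])
      · have h1 := h.1
        rw [hn β hβ, hn β' hβ'] at h1
        exact absurd h1 hlt.asymm
  · refine ⟨fun t h => lt_irrefl _ h.1, ?_, fun s t h => h.1, ?_, ?_, ?_⟩
    · exact fun r s t h1 h2 =>
        ⟨h1.1.trans h2.1, fun ξ hξ => (h1.2 ξ hξ).trans (h2.2 ξ (hξ.trans h1.1))⟩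
    · intro t α hα
      obtain ⟨δ, hδ, hδ2⟩ := exists_minRep F (hα.le.trans (e.symm t).2.1) (e.symm t).2.2.1
      obtain ⟨s, hs⟩ := hex ⟨(α, δ), hδ⟩
      exact ⟨s, by simp only [hs]; exact ⟨hα, hδ2⟩, by simp only [hs]⟩
    · intro s₁ s₂ t h1 h2 heq
      apply e.symm.injective
      simp only at heq h1 h2
      generalize e.symm s₁ = p at *
      generalize e.symm s₂ = q at *
      obtain ⟨⟨a, b⟩, hp⟩ := p
      obtain ⟨⟨c, d⟩, hq⟩ := q
      simp only at heq h1 h2 hp hq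
      subst heq
      have : b = d := le_antisymm
        (hp.2.2 d hq.1 fun ξ hξ => (h2.2 ξ hξ).trans (h1.2 ξ hξ).symm)
        (hq.2.2 b hp.1 fun ξ hξ => (h1.2 ξ hξ).trans (h2.2 ξ hξ).symm)
      subst this
      rfl
    · exact fun s₁ s₂ t h1 h2 hlt =>
        ⟨hlt, fun ξ hξ => (h1.2 ξ hξ).trans (h2.2 ξ (hξ.trans hlt)).symm⟩
  · intro α hα
    obtain ⟨δ, hδ, -⟩ := exists_minRep F le_rfl hα
    obtain ⟨t, ht⟩ := hex ⟨(α, δ), hδ⟩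
    exact ⟨t, by rw [ht]⟩
  · intro α
    rw [← Cardinal.lift_lt.{0, 1}]
    refine lt_of_le_of_lt ?_ (hsmall α)
    have h1 := Cardinal.mk_le_of_injective
      (α := ULift.{1} {t : T // (e.symm t).1.1 = α}) (β := minReps κ F α)
      (f := fun t => ⟨(e.symm t.down.1).1.2, by
        have := (e.symm t.down.1).2
        rwa [t.down.2] at this⟩) ?_
    · rwa [Cardinal.mk_uLift] at h1
    · rintro ⟨s, hs⟩ ⟨t, ht⟩ h
      simp only [Subtype.mk.injEq] at h
      congr 2
      exact e.symm.injective (Subtype.ext (Prod.ext (hs.trans ht.symm) h))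

lemma treeProperty_of_coloring {κ : Cardinal.{0}} (hreg : κ.IsRegular)
    (H : ∀ F : Ordinal.{0} → Ordinal.{0} → Ordinal.{0},
        (∀ α β, α < κ.ord → β < κ.ord → F α β < κ.ord) →
        (∀ β γ δ, β < γ → γ < δ → δ < κ.ord → F β γ = F β δ →
          ∀ α, α < β → F α γ = F α δ) →
        ∃ A : Set Ordinal.{0}, A ⊆ Set.Iio κ.ord ∧ #A = Cardinal.lift.{1} κ ∧
          ((∀ β ∈ A, ∀ γ ∈ A, ∀ δ ∈ A, β < γ → γ < δ → F β γ ≠ F β δ) ∨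
            (∀ β ∈ A, ∀ γ ∈ A, ∀ δ ∈ A, β < γ → γ < δ → F β γ = F β δ))) :
    TP κ := by
  intro T lt ht htree hht hlev hsize
  obtain ⟨-, htr, -, hpred, huniq, hcomp⟩ := htree
  have hpos : 0 < κ.ord := hreg.ord_pos
  obtain ⟨t₀, -⟩ := hlev 0 hpos
  have : Nonempty T := ⟨t₀⟩
  choose! t htt using hlev
  -- `r β γ` is the predecessor of `t γ` on level `β`.
  have hr : ∀ β γ, β < γ → γ < κ.ord → ∃ s, lt s (t γ) ∧ ht s = β := fun β γ h hγ =>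
    hpred (t γ) β (by rwa [htt γ hγ])
  choose! r hr1 hr2 using hr
  have hdown : ∀ α β γ δ, α ≤ β → β < γ → γ < κ.ord → β < δ → δ < κ.ord → r β γ = r β δ →
      r α γ = r α δ := by
    intro α β γ δ hαβ hγ hγκ hδ hδκ heq
    rcases hαβ.eq_or_lt with rfl | hαβ
    · exact heq
    have step : ∀ γ, β < γ → γ < κ.ord → lt (r α γ) (r β γ) := fun γ h1 h2 =>
      hcomp _ _ (t γ) (hr1 _ _ (hαβ.trans h1) h2) (hr1 _ _ h1 h2)
        (by rwa [hr2 _ _ (hαβ.trans h1) h2, hr2 _ _ h1 h2])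
    have h1 := step γ hγ hγκ
    rw [heq] at h1
    exact huniq _ _ _ h1 (step δ hδ hδκ)
      (by rw [hr2 _ _ (hαβ.trans hγ) hγκ, hr2 _ _ (hαβ.trans hδ) hδκ])
  let S : Ordinal.{0} → Ordinal.{0} → Set Ordinal.{0} :=
    fun β γ => {δ | β < δ ∧ δ < κ.ord ∧ r β δ = r β γ}
  let F : Ordinal.{0} → Ordinal.{0} → Ordinal.{0} := fun β γ => sInf (S β γ)
  have hFiff : ∀ β γ δ, β < γ → γ < κ.ord → β < δ → δ < κ.ord →
      (F β γ = F β δ ↔ r β γ = r β δ) := by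
    intro β γ δ h1 h2 h3 h4
    constructor
    · intro h
      have m1 : F β γ ∈ S β γ := csInf_mem ⟨γ, h1, h2, rfl⟩
      have m2 : F β δ ∈ S β δ := csInf_mem ⟨δ, h3, h4, rfl⟩
      rw [← m1.2.2, ← m2.2.2, h]
    · intro h
      simp only [F, S, h]
  have hhom := H F ?_ ?_
  · obtain ⟨A, hA, hcard, hcase⟩ := hhom
    have hunb := (mk_eq_iff_unbounded hreg hA).1 hcard
    rcases hcase with hinj | hconst
    · exfalso
      obtain ⟨β, hβ, -⟩ := hunb 0 hpos
      have hA' : A ∩ Set.Ioi β ⊆ Set.Iio κ.ord := fun x hx => hA hx.1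
      have h1 : #(A ∩ Set.Ioi β : Set Ordinal.{0}) = Cardinal.lift.{1} κ := by
        rw [mk_eq_iff_unbounded hreg hA']
        intro α hα
        obtain ⟨γ, hγ, hlt⟩ := hunb (max α β) (max_lt hα (hA hβ))
        exact ⟨γ, ⟨hγ, (le_max_right _ _).trans_lt hlt⟩, (le_max_left _ _).trans_lt hlt⟩
      have h2 := Cardinal.mk_le_of_injective
        (α := (A ∩ Set.Ioi β : Set Ordinal.{0})) (β := ULift.{1} {t : T // ht t = β})
        (f := fun γ => ⟨⟨r β γ, hr2 β γ γ.2.2 (hA γ.2.1)⟩⟩) ?_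
      · rw [h1, Cardinal.mk_uLift, Cardinal.lift_le] at h2
        exact absurd (hsize β) (not_lt.2 h2)
      · intro γ δ h
        simp only [ULift.up.injEq, Subtype.mk.injEq] at h
        have h3 := (hFiff β γ δ γ.2.2 (hA γ.2.1) δ.2.2 (hA δ.2.1)).2 h
        by_contra hne
        rcases lt_or_gt_of_ne hne with hlt | hlt
        · exact hinj β hβ γ γ.2.1 δ δ.2.1 γ.2.2 hlt h3
        · exact hinj β hβ δ δ.2.1 γ γ.2.1 δ.2.2 hlt h3.symm
    · refine ⟨{s | ∃ α, ∃ β ∈ A, ∃ γ ∈ A, α ≤ β ∧ β < γ ∧ s = r α γ}, ?_, ?_⟩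
      · rintro _ ⟨α, β, hβ, γ, hγ, h1, h2, rfl⟩ _ ⟨α', β', hβ', γ', hγ', h1', h2', rfl⟩ hne
        -- Both nodes are predecessors of `t δ` for any sufficiently large `δ ∈ A`.
        obtain ⟨δ, hδ, hlt⟩ := hunb (max γ γ') (max_lt (hA hγ) (hA hγ'))
        have hγδ : γ < δ := (le_max_left _ _).trans_lt hlt
        have hγδ' : γ' < δ := (le_max_right _ _).trans_lt hlt
        have move : ∀ α β γ, β ∈ A → γ ∈ A → α ≤ β → β < γ → γ < δ → r α γ = r α δ :=
          fun α β γ hβ hγ h1 h2 h3 =>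
            hdown α β γ δ h1 h2 (hA hγ) (h2.trans h3) (hA hδ)
              ((hFiff β γ δ h2 (hA hγ) (h2.trans h3) (hA hδ)).1
                (hconst β hβ γ hγ δ hδ h2 h3))
        rw [move α β γ hβ hγ h1 h2 hγδ, move α' β' γ' hβ' hγ' h1' h2' hγδ'] at hne ⊢
        have hα : α < δ := (h1.trans_lt h2).trans hγδ
        have hα' : α' < δ := (h1'.trans_lt h2').trans hγδ'
        rcases lt_trichotomy α α' with h | h | h
        · exact Or.inl (hcomp _ _ (t δ) (hr1 _ _ hα (hA hδ)) (hr1 _ _ hα' (hA hδ))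
            (by rwa [hr2 _ _ hα (hA hδ), hr2 _ _ hα' (hA hδ)]))
        · exact absurd (by rw [h]) hne
        · exact Or.inr (hcomp _ _ (t δ) (hr1 _ _ hα' (hA hδ)) (hr1 _ _ hα (hA hδ))
            (by rwa [hr2 _ _ hα (hA hδ), hr2 _ _ hα' (hA hδ)]))
      · intro α hα
        obtain ⟨β, hβ, h1⟩ := hunb α hα
        obtain ⟨γ, hγ, h2⟩ := hunb β (hA hβ)
        exact ⟨r α γ, ⟨α, β, hβ, γ, hγ, h1.le, h2, rfl⟩, hr2 _ _ (h1.trans h2) (hA hγ)⟩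
  · intro α β hα hβ
    rcases (S α β).eq_empty_or_nonempty with h | h
    · -- The infimum of the empty set is `0`.
      simpa [F, h] using hpos
    · exact (csInf_mem h).2.1
  · intro β γ δ h1 h2 h3 heq α hα
    have h4 := (hFiff β γ δ h1 (h2.trans h3) (h1.trans h2) h3).1 heq
    exact (hFiff α γ δ (hα.trans h1) (h2.trans h3) (hα.trans (h1.trans h2)) h3).2
      (hdown α β γ δ hα.le h1 (h2.trans h3) (h1.trans h2) h3 h4)

/-- the tree property `TP(κ)` is equivalent to the stated
partition-type property of colorings `F : κ × κ → κ`. -/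
theorem stmt7 (κ : Cardinal.{0}) (hreg : κ.IsRegular) (hunc : ℵ₀ < κ) :
    TP κ ↔
      ∀ F : Ordinal.{0} → Ordinal.{0} → Ordinal.{0},
        (∀ α β, α < κ.ord → β < κ.ord → F α β < κ.ord) →
        (∀ β γ δ, β < γ → γ < δ → δ < κ.ord → F β γ = F β δ →
          ∀ α, α < β → F α γ = F α δ) →
        ∃ A : Set Ordinal.{0}, A ⊆ Set.Iio κ.ord ∧ #A = Cardinal.lift.{1} κ ∧
          ((∀ β ∈ A, ∀ γ ∈ A, ∀ δ ∈ A, β < γ → γ < δ → F β γ ≠ F β δ) ∨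
            (∀ β ∈ A, ∀ γ ∈ A, ∀ δ ∈ A, β < γ → γ < δ → F β γ = F β δ)) := by
  exact ⟨fun h F _ hF => coloring_of_treeProperty hreg h F hF, treeProperty_of_coloring hreg⟩
end
end

section
/- Let κ be a regular uncountable cardinal and τ an infinite cardinal. If IE(τ, κ, I_κ) holds, then the transversal property PT(κ, τ) holds. -/
/-!
Suppose every subfamily of size `< κ` has a transversal, and for each `β < κ` let `G β` be a
transversal of the subfamily indexed by `[0, β]`. For `α < κ`, sorting the `β ∈ [α, κ)` by the value
`G β α ∈ X α` partitions `[α, κ)` into fewer than `τ` pieces, so the ideal extension principle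
selects a piece `h α`, on which `G β α` is a constant `g α`. Any two selected pieces meet, as the
union of their complements lies in a proper ideal. At a common element `β`, the function `g` agrees
with the injective `G β` at both indices, so `g` is a transversal of the whole family.
-/

set_option autoImplicit false

noncomputable section

open Cardinal Set

universe u

/-- `IE(τ, κ, I_κ)` implies the transversal property `PT(κ, τ)`. -/
theorem stmt8 (κ τ : Cardinal.{0}) (hreg : κ.IsRegular) (hunc : ℵ₀ < κ)
    (hτ : ℵ₀ ≤ τ) (hIE : IEkappa τ κ) : PT κ τ := by
  intro X hX hno
  by_contra! hall
  have hG : ∀ β, ∃ G : Ordinal.{0} → Ordinal.{0}, β < κ.ord →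
      (∀ α ∈ Set.Iic β, G α ∈ X α) ∧ Set.InjOn G (Set.Iic β) := by
    intro β
    by_cases hβ : β < κ.ord
    · have hlt : Order.succ β < κ.ord := (isSuccLimit_ord hreg.aleph0_le).succ_lt hβ
      obtain ⟨G, hG⟩ := hall (Set.Iic β) (fun x hx => lt_of_le_of_lt hx hβ) (by
        rw [← Order.Iio_succ, Cardinal.mk_Iio_ordinal, Cardinal.lift_lt]
        exact Cardinal.lt_ord.1 hlt)
      exact ⟨G, fun _ => hG⟩
    · exact ⟨id, fun h => absurd h hβ⟩
  choose G hG using hG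
  obtain ⟨h, hh, K, hK, -, hKh⟩ := hIE
    (fun α => Set.image (fun x => {β | β ∈ Set.Ico α κ.ord ∧ G β α = x})
      (Set.image (fun β => G β α) (Set.Ico α κ.ord))) (by
    intro α hα
    refine ⟨⟨?_, ?_, ?_, ?_⟩, ?_⟩
    · rintro _ ⟨_, ⟨β, hβ, rfl⟩, rfl⟩
      exact ⟨β, hβ, rfl⟩
    · rintro _ ⟨_, -, rfl⟩ β hβ
      exact hβ.1
    · rintro _ ⟨x, -, rfl⟩ _ ⟨y, -, rfl⟩ hne
      by_contra hmeet
      obtain ⟨β, h1, h2⟩ := Set.nonempty_iff_ne_empty.2 hmeet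
      have hxy : x = y := h1.2.symm.trans h2.2
      exact hne (by rw [hxy])
    · ext β
      constructor
      · rintro ⟨_, ⟨x, -, rfl⟩, hβ⟩
        exact hβ.1
      · intro hβ
        exact ⟨_, ⟨_, ⟨β, hβ, rfl⟩, rfl⟩, hβ, rfl⟩
    · refine lt_of_le_of_lt (Cardinal.mk_image_le.trans (Cardinal.mk_le_mk_of_subset ?_)) (hX α hα)
      rintro _ ⟨β, hβ, rfl⟩
      exact (hG β hβ.2).1 α hβ.1)
  have hval : ∀ α, ∃ x, α < κ.ord → x ∈ X α ∧ ∀ β ∈ h α, β ∈ Set.Ico α κ.ord ∧ G β α = x := by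
    intro α
    by_cases hα : α < κ.ord
    · obtain ⟨x, ⟨β, hβ, hx⟩, hx'⟩ := hh α hα
      refine ⟨x, fun _ => ⟨hx ▸ (hG β hβ.2).1 α hβ.1, fun γ hγ => ?_⟩⟩
      rw [← hx'] at hγ
      exact hγ
    · exact ⟨0, fun h => absurd h hα⟩
  choose g hg using hval
  refine hno ⟨g, fun α hα => (hg α hα).1, fun α hα α' hα' heq => ?_⟩
  have hmeet : ∃ β, β ∈ h α ∧ β ∈ h α' := by
    by_contra! hdisj
    refine hK.ground_not_mem (hK.mem_of_subset _
      (hK.union_mem _ (hKh α hα) _ (hKh α' hα')) _ fun β hβ => ?_)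
    by_cases hm : β ∈ h α
    · exact Or.inr ⟨hβ, hdisj β hm⟩
    · exact Or.inl ⟨hβ, hm⟩
  obtain ⟨β, h1, h2⟩ := hmeet
  obtain ⟨hb, e1⟩ := (hg α hα).2 β h1
  obtain ⟨hb', e2⟩ := (hg α' hα').2 β h2
  exact (hG β hb.2).2 hb.1 hb'.1 (e1.trans (heq.trans e2.symm))
end
end

section
/- Let χ be a singular cardinal such that PS^+((cf(χ))^+, χ^+) holds. Then cov(χ, χ, (cf(χ))^+, 2) = χ^+. -/
/-!
Write `θ = cf χ` and fix `S` cofinal in `χ` with `|S| = θ`.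

The inequality `cov(χ, χ, θ⁺, 2) ≥ χ⁺` is a diagonalization along `S` (`not_cover_of_mk_le`).

For the other inequality, decompose every `γ + 1` with `γ < χ⁺` as `⋃ s ∈ S, A γ s` with
`|A γ s| < χ`. If the covering number exceeds `χ⁺`, choose recursively sets `a α ⊆ χ` of size at
most `θ`, for `α < χ⁺`, such that `a α` is not contained in `⋃ {a β : β ∈ A γ s, β < α}` for any
`γ < χ⁺` and `s ∈ S`; at each stage only `χ⁺` sets of size `< χ` have to be avoided
(`exists_uncovered_sequence`). For `α ≤ γ < χ⁺` colour `γ` by a pair `c α γ = (s, x)` with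
`α ∈ A γ s` and `x ∈ a α` outside all `a β` with `β ∈ A γ s`, `β < α`. This partitions `χ⁺ \ α`
into at most `θ` pieces, indexed by `S × a α`. The principle `PS⁺(θ⁺, χ⁺)` selects, for `α` in a
cofinal set `B`, pairs `d α ∈ S × a α` such that any two of the selected pieces meet. If `β < α`
in `B` had `d β = d α = (s, x)`, a common point `γ` of their pieces would give `β ∈ A γ s` and
`x ∈ a β`, against the choice of `c α γ`. Hence `d` injects `B`, of size `χ⁺`, into `S × χ`, of
size `χ`, a contradiction (`not_PSPlusOne_of_uncovered`).
-/

set_option autoImplicit false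

noncomputable section

open Cardinal Set

universe u

theorem mk_biUnion_le_mul {α ι : Type u} (A : ι → Set α) (s : Set ι) (c : Cardinal.{u})
    (h : ∀ x ∈ s, #(A x) ≤ c) : #(⋃ x ∈ s, A x : Set α) ≤ #s * c :=
  (Cardinal.mk_biUnion_le A s).trans (mul_le_mul' le_rfl (ciSup_le' fun x => h x.1 x.2))

theorem exists_cofinal_set (χ : Cardinal.{0}) (hinf : ℵ₀ ≤ χ) :
    ∃ S : Set Ordinal.{0}, S ⊆ Set.Iio χ.ord ∧ (∀ ξ < χ.ord, ∃ s ∈ S, ξ < s) ∧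
      #S = Cardinal.lift.{1} χ.ord.cof := by
  obtain ⟨S, hS, hcard⟩ := Order.exists_cof_eq (Set.Iio χ.ord)
  refine ⟨Subtype.val '' S, ?_, ?_, ?_⟩
  · rintro _ ⟨s, -, rfl⟩
    exact s.2
  · intro ξ hξ
    have hlim := Cardinal.isSuccLimit_ord hinf
    obtain ⟨s, hs, hle⟩ := hS ⟨Order.succ ξ, hlim.succ_lt hξ⟩
    exact ⟨s, ⟨s, hs, rfl⟩, (Order.lt_succ ξ).trans_le hle⟩
  · rw [Cardinal.mk_image_eq Subtype.val_injective, hcard, Ordinal.cof_Iio, Ordinal.lift_cof]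

/-- A family of at most `χ` sets of size `< χ` leaves some set of size `≤ cf χ` uncovered: for
each `s` in a cofinal set of size `cf χ`, pick a point outside the union of the members that have
index below `s` and size at most `|s|`. -/
theorem not_cover_of_mk_le (χ : Cardinal.{0}) (hinf : ℵ₀ ≤ χ)
    (X : Set (Set Ordinal.{0})) (hXcard : #X ≤ Cardinal.lift.{1} χ)
    (hX : ∀ y ∈ X, #y < Cardinal.lift.{1} χ) :
    ∃ a : Set Ordinal.{0}, a ⊆ Set.Iio χ.ord ∧ a.Nonempty ∧
      #a ≤ Cardinal.lift.{1} χ.ord.cof ∧ ∀ y ∈ X, ¬a ⊆ y := by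
  obtain ⟨S, hSsub, hScof, hScard⟩ := exists_cofinal_set χ hinf
  have hinf' : ℵ₀ ≤ Cardinal.lift.{1} χ := by simpa using hinf
  have hpos : (0 : Ordinal.{0}) < χ.ord := (Cardinal.isSuccLimit_ord hinf).bot_lt
  have hIio : #(Set.Iio χ.ord) = Cardinal.lift.{1} χ := by
    rw [Cardinal.mk_Iio_ordinal, Cardinal.card_ord]
  obtain ⟨e⟩ : Nonempty (X ↪ Set.Iio χ.ord) := by
    have : #X ≤ #(Set.Iio χ.ord) := hXcard.trans hIio.ge
    exact Cardinal.le_def _ _ |>.1 this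
  let F : Ordinal.{0} → Set X := fun s =>
    {y | (e y : Ordinal.{0}) < s ∧ #(y : Set Ordinal.{0}) ≤ Cardinal.lift.{1} s.card}
  have hF : ∀ s ∈ S, #(⋃ y ∈ F s, (y : Set Ordinal.{0}) : Set Ordinal.{0}) <
      Cardinal.lift.{1} χ := by
    intro s hs
    have hsc : Cardinal.lift.{1} s.card < Cardinal.lift.{1} χ :=
      Cardinal.lift_lt.2 (Cardinal.lt_ord.1 (hSsub hs))
    have h1 : #(F s) ≤ Cardinal.lift.{1} s.card := by
      rw [← Cardinal.mk_Iio_ordinal]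
      refine Cardinal.mk_le_of_injective
        (f := fun y : F s => (⟨(e y.1 : Ordinal.{0}), y.2.1⟩ : Set.Iio s)) ?_
      intro y z h
      exact Subtype.ext (e.injective (Subtype.ext (Subtype.mk.inj h)))
    refine (mk_biUnion_le_mul (fun y : X => (y : Set Ordinal.{0})) (F s) _
      (fun y hy => hy.2)).trans_lt ?_
    exact Cardinal.mul_lt_of_lt hinf' (h1.trans_lt hsc) hsc
  have hpick : ∀ s ∈ S, ∃ x ∈ Set.Iio χ.ord, x ∉ ⋃ y ∈ F s, (y : Set Ordinal.{0}) := by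
    intro s hs
    by_contra! hcon
    exact absurd ((Cardinal.mk_le_mk_of_subset hcon).trans_lt (hF s hs)) (by rw [hIio]; simp)
  choose! p hp hpF using hpick
  obtain ⟨s₀, hs₀, -⟩ := hScof 0 hpos
  refine ⟨p '' S, ?_, ⟨_, s₀, hs₀, rfl⟩, Cardinal.mk_image_le.trans hScard.le, ?_⟩
  · rintro _ ⟨s, hs, rfl⟩
    exact hp s hs
  · intro y hy hsub
    obtain ⟨c, hc⟩ := Cardinal.mem_range_lift_of_le (hX y hy).le
    have hcχ : c < χ := by
      have := hX y hy
      rwa [← hc, Cardinal.lift_lt] at this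
    obtain ⟨s, hs, hlt⟩ := hScof (max (e ⟨y, hy⟩) c.ord)
      (max_lt (e ⟨y, hy⟩).2 (Cardinal.ord_lt_ord.2 hcχ))
    refine hpF s hs (Set.mem_biUnion (x := ⟨y, hy⟩) ⟨(le_max_left _ _).trans_lt hlt, ?_⟩
      (hsub ⟨s, hs, rfl⟩))
    change #y ≤ _
    rw [← hc, Cardinal.lift_le]
    exact Cardinal.ord_le.1 ((le_max_right _ _).trans hlt.le)

/-- If no family of `χ⁺` sets of size `< χ` covers all subsets of `χ` of size `≤ cf χ`, then there
are such subsets `a α` with `a α ⊄ ⋃ {a β : β ∈ A γ s, β < α}` for *all* `γ < χ⁺` and `s ∈ S`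
simultaneously: by recursion on `α`, these unions form a family of at most `χ⁺` sets. -/
theorem exists_uncovered_sequence (χ : Cardinal.{0}) (hinf : ℵ₀ ≤ χ) (hsing : χ.ord.cof < χ)
    (S : Set Ordinal.{0}) (hScard : #S ≤ Cardinal.lift.{1} χ)
    (A : Ordinal.{0} → Ordinal.{0} → Set Ordinal.{0})
    (hA : ∀ γ < (Order.succ χ).ord, ∀ s ∈ S, #(A γ s) < Cardinal.lift.{1} χ)
    (hunc : ∀ X : Set (Set Ordinal.{0}), #X ≤ Cardinal.lift.{1} (Order.succ χ) →
      (∀ y ∈ X, y ⊆ Set.Iio χ.ord ∧ #y < Cardinal.lift.{1} χ) →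
      ∃ a : Set Ordinal.{0}, a ⊆ Set.Iio χ.ord ∧ #a ≤ Cardinal.lift.{1} χ.ord.cof ∧
        ∀ y ∈ X, ¬a ⊆ y) :
    ∃ a : Ordinal.{0} → Set Ordinal.{0}, ∀ α, a α ⊆ Set.Iio χ.ord ∧
      #(a α) ≤ Cardinal.lift.{1} χ.ord.cof ∧
      ∀ γ < (Order.succ χ).ord, ∀ s ∈ S, ∃ x ∈ a α, ∀ β < α, β ∈ A γ s → x ∉ a β := by
  have hinf' : ℵ₀ ≤ Cardinal.lift.{1} χ := by simpa using hinf
  let G := {a : Set Ordinal.{0} // a ⊆ Set.Iio χ.ord ∧ #a ≤ Cardinal.lift.{1} χ.ord.cof}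
  have hstep : ∀ (α : Ordinal.{0}) (f : ∀ β, β < α → G), ∃ b : G,
      ∀ γ < (Order.succ χ).ord, ∀ s ∈ S, ∃ x ∈ b.1, ∀ β (hβ : β < α), β ∈ A γ s →
        x ∉ (f β hβ).1 := by
    intro α f
    let f' : Ordinal.{0} → Set Ordinal.{0} := fun β => if hβ : β < α then (f β hβ).1 else ∅
    have hf'sub : ∀ β, f' β ⊆ Set.Iio χ.ord := by
      intro β
      by_cases hβ : β < α
      · simpa [f', hβ] using (f β hβ).2.1
      · simp [f', hβ]
    have hf'card : ∀ β, #(f' β) ≤ Cardinal.lift.{1} χ.ord.cof := by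
      intro β
      by_cases hβ : β < α
      · simpa [f', hβ] using (f β hβ).2.2
      · simp [f', hβ]
    let Y : Ordinal.{0} × Ordinal.{0} → Set Ordinal.{0} := fun p => ⋃ β ∈ A p.1 p.2, f' β
    obtain ⟨b, hbsub, hbcard, hb⟩ := hunc (Y '' (Set.Iio (Order.succ χ).ord ×ˢ S)) (by
        refine Cardinal.mk_image_le.trans ?_
        rw [Cardinal.mk_setProd, Cardinal.mk_Iio_ordinal, Cardinal.card_ord]
        have h : ℵ₀ ≤ Cardinal.lift.{1} (Order.succ χ) := by
          exact Cardinal.aleph0_le_lift.2 (hinf.trans (Order.le_succ χ))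
        refine Cardinal.mul_le_of_le h ?_ ?_
        · simp
        · simpa using hScard.trans (Cardinal.lift_le.2 (Order.le_succ χ)))
      (by
        rintro _ ⟨⟨γ, s⟩, ⟨hγ, hs⟩, rfl⟩
        refine ⟨Set.iUnion₂_subset fun β _ => hf'sub β, ?_⟩
        refine (mk_biUnion_le_mul f' _ _ fun β _ => hf'card β).trans_lt ?_
        exact Cardinal.mul_lt_of_lt hinf' (hA γ hγ s hs) (Cardinal.lift_lt.2 hsing))
    refine ⟨⟨b, hbsub, hbcard⟩, fun γ hγ s hs => ?_⟩
    obtain ⟨x, hxb, hx⟩ := Set.not_subset.1 (hb _ ⟨(γ, s), ⟨hγ, hs⟩, rfl⟩)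
    refine ⟨x, hxb, fun β hβ hβA hxβ => hx (Set.mem_biUnion hβA ?_)⟩
    simpa [f', hβ] using hxβ
  choose step hstep using hstep
  let a : Ordinal.{0} → G := Ordinal.lt_wf.fix step
  have ha : ∀ α, a α = step α fun β _ => a β := fun α => Ordinal.lt_wf.fix_eq step α
  refine ⟨fun α => (a α).1, fun α => ⟨(a α).2.1, (a α).2.2, fun γ hγ s hs => ?_⟩⟩
  obtain ⟨x, hx, h⟩ := hstep α (fun β _ => a β) γ hγ s hs
  exact ⟨x, by simpa only [ha α] using hx, h⟩

theorem mk_Iio_succ_le (χ : Cardinal.{0}) (hinf : ℵ₀ ≤ χ) (β : Ordinal.{0})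
    (hβ : β < (Order.succ χ).ord) : #(Set.Iio (Order.succ β)) ≤ Cardinal.lift.{1} χ := by
  have hlim := Cardinal.isSuccLimit_ord (hinf.trans (Order.le_succ χ))
  rw [Cardinal.mk_Iio_ordinal, Cardinal.lift_le]
  exact Order.lt_succ_iff.1 (Cardinal.lt_ord.1 (hlim.succ_lt hβ))

/-- Every `γ < χ⁺` decomposes as `γ + 1 = ⋃ s ∈ S, A γ s` with all pieces of size `< χ`, where `S`
is cofinal in `χ`: transport the initial segments of `χ` along an injection of `γ + 1` into `χ`. -/
theorem exists_filtration (χ : Cardinal.{0}) (hinf : ℵ₀ ≤ χ) (S : Set Ordinal.{0})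
    (hSsub : S ⊆ Set.Iio χ.ord) (hScof : ∀ ξ < χ.ord, ∃ s ∈ S, ξ < s) :
    ∃ A : Ordinal.{0} → Ordinal.{0} → Set Ordinal.{0},
      (∀ γ < (Order.succ χ).ord, ∀ s ∈ S, #(A γ s) < Cardinal.lift.{1} χ) ∧
      ∀ γ < (Order.succ χ).ord, ∀ α ≤ γ, ∃ s ∈ S, α ∈ A γ s := by
  have hinj : ∀ γ < (Order.succ χ).ord, ∃ φ : Ordinal.{0} → Ordinal.{0},
      Set.InjOn φ (Set.Iic γ) ∧ ∀ α ≤ γ, φ α < χ.ord := by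
    intro γ hγ
    have hle : #(Set.Iio (Order.succ γ)) ≤ #(Set.Iio χ.ord) := by
      rw [Cardinal.mk_Iio_ordinal χ.ord, Cardinal.card_ord]
      exact mk_Iio_succ_le χ hinf γ hγ
    obtain ⟨e⟩ := (Cardinal.le_def _ _).1 hle
    refine ⟨fun α => if h : α < Order.succ γ then (e ⟨α, h⟩ : Ordinal.{0}) else 0, ?_, ?_⟩
    · intro x hx y hy hxy
      have hx' : x < Order.succ γ := Order.lt_succ_iff.2 hx
      have hy' : y < Order.succ γ := Order.lt_succ_iff.2 hy
      simp only [dif_pos hx', dif_pos hy'] at hxy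
      exact congrArg Subtype.val (e.injective (Subtype.ext hxy))
    · intro α hα
      have hα' : α < Order.succ γ := Order.lt_succ_iff.2 hα
      simp only [dif_pos hα']
      exact (e ⟨α, hα'⟩).2
  choose! φ hφ hφlt using hinj
  refine ⟨fun γ s => {α | α ≤ γ ∧ φ γ α < s}, fun γ hγ s hs => ?_, fun γ hγ α hα => ?_⟩
  · have h : #{α | α ≤ γ ∧ φ γ α < s} ≤ #(Set.Iio s) :=
      Cardinal.mk_le_of_injective
        (f := fun α : {α | α ≤ γ ∧ φ γ α < s} => (⟨φ γ α.1, α.2.2⟩ : Set.Iio s))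
        fun x y hxy => Subtype.ext (hφ γ hγ x.2.1 y.2.1 (congrArg Subtype.val hxy))
    rw [Cardinal.mk_Iio_ordinal] at h
    exact h.trans_lt (Cardinal.lift_lt.2 (Cardinal.lt_ord.1 (hSsub hs)))
  · obtain ⟨s, hs, hlt⟩ := hScof _ (hφlt γ hγ α hα)
    exact ⟨s, hs, hα, hlt⟩

theorem lt_mk_of_unbounded (χ : Cardinal.{0}) (hinf : ℵ₀ ≤ χ) (B : Set Ordinal.{0})
    (hB : B ⊆ Set.Iio (Order.succ χ).ord) (hcof : ∀ γ < (Order.succ χ).ord, ∃ β ∈ B, γ ≤ β) :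
    Cardinal.lift.{1} χ < #B := by
  by_contra! hle
  have hinf' : ℵ₀ ≤ Cardinal.lift.{1} χ := by simpa using hinf
  have hsub : Set.Iio (Order.succ χ).ord ⊆ ⋃ β ∈ B, Set.Iio (Order.succ β) := by
    intro γ hγ
    obtain ⟨β, hβ, h⟩ := hcof γ hγ
    exact Set.mem_biUnion hβ (Order.lt_succ_iff.2 h)
  have h1 := Cardinal.mk_le_mk_of_subset hsub
  rw [Cardinal.mk_Iio_ordinal, Cardinal.card_ord] at h1
  have h2 := mk_biUnion_le_mul (fun β : Ordinal.{0} => Set.Iio (Order.succ β)) B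
    (Cardinal.lift.{1} χ) (fun β hβ => mk_Iio_succ_le χ hinf β (hB hβ))
  have h3 := (h1.trans h2).trans (Cardinal.mul_le_of_le hinf' hle le_rfl)
  rw [Cardinal.lift_le] at h3
  exact absurd h3 (Order.lt_succ χ).not_ge

/-- The combinatorial core: an uncovered sequence yields partitions violating `PS⁺((cf χ)⁺, χ⁺)`. -/
theorem not_PSPlusOne_of_uncovered (χ : Cardinal.{0}) (hinf : ℵ₀ ≤ χ) (hsing : χ.ord.cof < χ)
    (hunc : ∀ X : Set (Set Ordinal.{0}), #X ≤ Cardinal.lift.{1} (Order.succ χ) →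
      (∀ y ∈ X, y ⊆ Set.Iio χ.ord ∧ #y < Cardinal.lift.{1} χ) →
      ∃ a : Set Ordinal.{0}, a ⊆ Set.Iio χ.ord ∧ #a ≤ Cardinal.lift.{1} χ.ord.cof ∧
        ∀ y ∈ X, ¬a ⊆ y) :
    ¬PSPlusOne (Order.succ χ.ord.cof) (Order.succ χ) := by
  intro hPS
  have hinf' : ℵ₀ ≤ Cardinal.lift.{1} χ := by simpa using hinf
  have hcofinf : ℵ₀ ≤ Cardinal.lift.{1} χ.ord.cof := by
    rw [Cardinal.aleph0_le_lift, Ordinal.aleph0_le_cof_iff]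
    exact Ordinal.one_lt_cof_iff.2 (Cardinal.isSuccLimit_ord hinf)
  obtain ⟨S, hSsub, hScof, hScard⟩ := exists_cofinal_set χ hinf
  obtain ⟨A, hAcard, hA⟩ := exists_filtration χ hinf S hSsub hScof
  have hSle : #S ≤ Cardinal.lift.{1} χ := hScard.trans_le (Cardinal.lift_le.2 hsing.le)
  obtain ⟨a, ha⟩ := exists_uncovered_sequence χ hinf hsing S hSle A hAcard hunc
  have hcol : ∀ α γ, α ≤ γ → γ < (Order.succ χ).ord → ∃ p : Ordinal.{0} × Ordinal.{0},
      p ∈ S ×ˢ a α ∧ α ∈ A γ p.1 ∧ ∀ β < α, β ∈ A γ p.1 → p.2 ∉ a β := by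
    intro α γ hαγ hγ
    obtain ⟨s, hs, hαs⟩ := hA γ hγ α hαγ
    obtain ⟨x, hx, h⟩ := (ha α).2.2 γ hγ s hs
    exact ⟨(s, x), ⟨hs, hx⟩, hαs, h⟩
  -- `c α γ = (s, x)` with `α ∈ A γ s` and `x` a point of `a α` outside all earlier `a β`, `β ∈ A γ s`
  choose! c hcmem hcA hca using hcol
  let P : Ordinal.{0} → Ordinal.{0} × Ordinal.{0} → Set Ordinal.{0} := fun α p =>
    {γ | γ ∈ Set.Ico α (Order.succ χ).ord ∧ c α γ = p}
  let Q : Ordinal.{0} → Set (Set Ordinal.{0}) := fun α =>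
    {D | D.Nonempty ∧ D ∈ P α '' (S ×ˢ a α)}
  obtain ⟨B, hBsub, hBcof, h, hhQ, hh⟩ := hPS Q (by
    intro α hα
    refine ⟨⟨fun D hD => hD.1, ?_, ?_, ?_⟩, ?_⟩
    · rintro _ ⟨-, p, -, rfl⟩ γ hγ
      exact hγ.1
    · rintro _ ⟨-, p, -, rfl⟩ _ ⟨-, q, -, rfl⟩ hne
      rw [Set.eq_empty_iff_forall_notMem]
      rintro γ ⟨hp, hq⟩
      exact hne (by rw [← hp.2, ← hq.2])
    · apply Set.Subset.antisymm
      · rintro γ ⟨_, ⟨-, p, -, rfl⟩, hγ⟩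
        exact hγ.1
      · intro γ hγ
        exact ⟨P α (c α γ), ⟨⟨γ, hγ, rfl⟩, c α γ, hcmem α γ hγ.1 hγ.2, rfl⟩, hγ, rfl⟩
    · rw [Cardinal.lift_succ, Order.lt_succ_iff]
      refine (Cardinal.mk_le_mk_of_subset fun D hD => hD.2).trans
        (Cardinal.mk_image_le.trans ?_)
      rw [Cardinal.mk_setProd]
      simpa using Cardinal.mul_le_of_le hcofinf hScard.le (ha α).2.1)
  have hd : ∀ β ∈ B, ∃ p ∈ S ×ˢ a β, P β p = h β := fun β hβ => (hhQ β hβ).2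
  choose! d hdmem hdP using hd
  have hnotinj : ¬Set.InjOn d B := by
    intro hinj
    have h1 : #B ≤ #(S ×ˢ Set.Iio χ.ord : Set (Ordinal.{0} × Ordinal.{0})) :=
      Cardinal.mk_le_of_injective
        (f := fun β : B => (⟨d β.1, (hdmem β.1 β.2).1, (ha β.1).1 (hdmem β.1 β.2).2⟩ :
          (S ×ˢ Set.Iio χ.ord : Set (Ordinal.{0} × Ordinal.{0}))))
        fun x y hxy => Subtype.ext (hinj x.2 y.2 (congrArg Subtype.val hxy))
    have h2 : #(S ×ˢ Set.Iio χ.ord : Set (Ordinal.{0} × Ordinal.{0})) ≤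
        Cardinal.lift.{1} χ := by
      rw [Cardinal.mk_setProd, Cardinal.mk_Iio_ordinal, Cardinal.card_ord]
      simpa using Cardinal.mul_le_of_le hinf' hSle le_rfl
    exact absurd (h1.trans h2) (lt_mk_of_unbounded χ hinf B hBsub hBcof).not_ge
  -- if `d β = d α = (s, x)` and `γ` is a common point of the selected pieces, then `β ∈ A γ s` and
  -- `x ∈ a β`, whereas `x = (c α γ).2` avoids `a β`
  have hlt : ∀ β ∈ B, ∀ α ∈ B, β < α → d β ≠ d α := by
    intro β hβ α hα hβα heq
    obtain ⟨γ, hγα, hγβ⟩ := hh α hα β hβ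
    rw [← hdP α hα] at hγα
    rw [← hdP β hβ] at hγβ
    have hβA := hcA β γ hγβ.1.1 hγβ.1.2
    have hav := hca α γ hγα.1.1 hγα.1.2 β hβα
    rw [hγα.2, ← heq] at hav
    rw [hγβ.2] at hβA
    exact hav hβA (hdmem β hβ).2
  refine hnotinj fun x hx y hy hxy => ?_
  rcases lt_trichotomy x y with hl | hl | hl
  · exact absurd hxy (hlt x hx y hy hl)
  · exact hl
  · exact absurd hxy.symm (hlt y hy x hx hl)

/-- if `χ` is singular and `PS⁺((cf χ)⁺, χ⁺)` holds, then
`cov (χ, χ, (cf χ)⁺, 2) = χ⁺`. -/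
theorem stmt9 (χ : Cardinal.{0}) (hinf : ℵ₀ ≤ χ) (hsing : χ.ord.cof < χ)
    (hPS : PSPlusOne (Order.succ χ.ord.cof) (Order.succ χ)) :
    covNum χ χ (Order.succ χ.ord.cof) 2 = Cardinal.lift.{1} (Order.succ χ) := by
  have hle : ∀ a : Set Ordinal.{0}, #a < Cardinal.lift.{1} (Order.succ χ.ord.cof) ↔
      #a ≤ Cardinal.lift.{1} χ.ord.cof := fun a => by
    rw [Cardinal.lift_succ, Order.lt_succ_iff]
  refine le_antisymm ?_ ?_
  · by_contra! hlt
    refine not_PSPlusOne_of_uncovered χ hinf hsing (fun X hXcard hX => ?_) hPS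
    by_contra! hcov
    refine absurd ((csInf_le' ?_).trans hXcard) hlt.not_ge
    refine ⟨X, rfl, hX, fun a ha hacard => ?_⟩
    obtain ⟨y, hy, hay⟩ := hcov a ha ((hle a).1 hacard)
    exact ⟨{y}, by simpa using hy, by simp, by simpa using hay⟩
  · refine le_csInf ?_ ?_
    · refine ⟨_, {y | y ⊆ Set.Iio χ.ord ∧ #y < Cardinal.lift.{1} χ}, rfl, fun y hy => hy,
        fun a ha hacard => ⟨{a}, ?_, by simp, by simp⟩⟩
      rintro _ rfl
      exact ⟨ha, ((hle _).1 hacard).trans_lt (Cardinal.lift_lt.2 hsing)⟩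
    · rintro _ ⟨X, rfl, hX, hcov⟩
      rw [Cardinal.lift_succ, Order.succ_le_iff]
      by_contra! hXcard
      obtain ⟨a, hasub, ⟨x, hx⟩, hacard, hnot⟩ :=
        not_cover_of_mk_le χ hinf X hXcard fun y hy => (hX y hy).2
      obtain ⟨Q, hQX, hQcard, haQ⟩ := hcov a hasub ((hle a).2 hacard)
      obtain ⟨y, hyQ, -⟩ := haQ hx
      have hsub : Q.Subsingleton := by
        rw [← Cardinal.mk_le_one_iff_set_subsingleton, ← Order.lt_succ_iff]
        refine hQcard.trans_le ?_
        simpa [← one_add_one_eq_two] using Cardinal.add_one_le_of_lt (Order.lt_succ (1 : Cardinal.{1}))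
      refine hnot y (hQX hyQ) fun z hz => ?_
      obtain ⟨w, hw, hzw⟩ := haQ hz
      rwa [hsub hyQ hw]
end
end

section
/- Let κ be a regular uncountable cardinal and λ ≥ κ. Suppose that κ = ν^+, where ν is a singular cardinal that is the limit of a set of cardinals each of which is mildly λ^{<κ}-ineffable. Then PS(κ, κ, λ) holds. -/
/-!
Write `P` for `P_κ(λ)`. Number the pieces of each partition `Q a` by ordinals below `ν`, and let
`F a c < ν` be the number of the piece of `Q a` containing `c`. The argument follows the
Magidor–Shelah proof of the tree property at successors of singular limits of strongly compact
cardinals, with mild ineffability in place of fine complete ultrafilters.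

Mild `λ^{<κ}`-ineffability of `ρ < ν` gives a compactness principle (`exists_assignment`): since
`|P| = λ^{<κ}`, a `P`-indexed family of subsets of `P` admits a truth assignment all of whose
restrictions to fewer than `ρ` sets are realised by arbitrarily large points of `P`, which can be
taken in a prescribed cofinal set.

Applied with `ρ > cof ν` to the sets `{c : F a c ≤ i}`, for `i` in a cofinal subset of `ν` of
size `cof ν`, this bounds the colours of `a` by some `i_a < ν`. As `P` is `κ`-directed,
`pigeonhole` makes the bound constant, with value `m < ν`, on two disjoint cofinal sets `D` and
`E` (`exists_split`). So for `a ∈ E` and `t ∈ D` there is `c ⊇ a ∪ t` with `F a c, F t c ≤ m`.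

Applied again with `ρ > m` and points `t ∈ D`, the principle makes the pair `(F a c, F t c)`
equal to some `(ξ_a, η_a)` for coherently many `t`. On a cofinal `B ⊆ E` the value `η_a` is a
constant `η`. Selecting the piece numbered `ξ_a` for `a ∈ E` and the one numbered `η` elsewhere,
in particular on `D`, witnesses the principle. Disjointness of `D` and `E` ensures that the two
prescriptions do not conflict.
-/


set_option autoImplicit false

noncomputable section

open Cardinal Set

universe u

namespace PieceSelection

/-- `P_κ(λ)` as a type; the induced order is inclusion. -/
abbrev PklT (κ lam : Cardinal.{0}) : Type 1 := ↥(Pkl κ lam)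

variable {κ lam ν : Cardinal.{0}}

theorem mk_Iio_card_ord (c : Cardinal.{0}) : #(Set.Iio c.ord) = Cardinal.lift.{1} c := by
  rw [Cardinal.mk_Iio_ordinal, card_ord]

theorem mk_le_lift (hκν : κ = Order.succ ν) (x : PklT κ lam) : #x.1 ≤ Cardinal.lift.{1} ν := by
  subst hκν
  have := x.2.2
  rwa [lift_succ, Order.lt_succ_iff] at this

/-- For `κ = ν⁺`, a union of at most `ν` sets of size `< κ` has size `< κ`. -/
theorem mk_iUnion_lt_lift (hκν : κ = Order.succ ν) (hνinf : ℵ₀ ≤ ν) {J : Type 1}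
    (hJ : #J ≤ Cardinal.lift.{1} ν) (f : J → Set Ordinal.{0})
    (hf : ∀ j, #(f j) < Cardinal.lift.{1} κ) : #(⋃ j, f j) < Cardinal.lift.{1} κ := by
  subst hκν
  rw [lift_succ, Order.lt_succ_iff]
  have hν' : ℵ₀ ≤ Cardinal.lift.{1} ν := by simpa using hνinf
  refine (mk_iUnion_le f).trans ?_
  calc #J * ⨆ j, #(f j) ≤ Cardinal.lift.{1} ν * Cardinal.lift.{1} ν := by
        refine mul_le_mul' hJ (ciSup_le' fun j => ?_)
        have := hf j
        rwa [lift_succ, Order.lt_succ_iff] at this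
    _ = _ := mul_eq_self hν'

/-- `P_{ν⁺}(λ)` is `ν⁺`-directed. -/
theorem exists_upper (hκν : κ = Order.succ ν) (hνinf : ℵ₀ ≤ ν) {J : Type 1}
    (hJ : #J ≤ Cardinal.lift.{1} ν) (f : J → PklT κ lam) : ∃ x : PklT κ lam, ∀ j, f j ≤ x :=
  ⟨⟨⋃ j, (f j).1, Set.iUnion_subset fun j => (f j).2.1,
    mk_iUnion_lt_lift hκν hνinf hJ _ fun j => (f j).2.2⟩, fun j => Set.subset_iUnion
      (fun j => (f j).1) j⟩

/-- Splitting a cofinal set into at most `ν` pieces leaves one piece cofinal. -/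
theorem pigeonhole (hκν : κ = Order.succ ν) (hνinf : ℵ₀ ≤ ν) {J : Type 1}
    (hJ : #J ≤ Cardinal.lift.{1} ν) (A : Set (PklT κ lam)) (hA : IsCofinal A)
    (g : PklT κ lam → J) : ∃ j, IsCofinal {x | x ∈ A ∧ g x = j} := by
  by_contra! h
  simp only [IsCofinal, not_forall, not_exists, not_and] at h
  choose z hz using h
  obtain ⟨x, hx⟩ := exists_upper hκν hνinf hJ z
  obtain ⟨y, hy, hxy⟩ := hA x
  exact hz (g y) y ⟨hy, rfl⟩ ((hx _).trans hxy)

theorem mk_PklT_prod_le (hκν : κ = Order.succ ν) (hνinf : ℵ₀ ≤ ν) (hkl : κ ≤ lam) {I : Type 1}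
    (hI : #I ≤ Cardinal.lift.{1} ν) :
    #(PklT κ lam × I) ≤ Cardinal.lift.{1} (Cardinal.powerlt lam κ) := by
  have hνκ : ν < κ := hκν ▸ Order.lt_succ ν
  have hlam : ℵ₀ ≤ lam := hνinf.trans (hνκ.le.trans hkl)
  have hν1 : ν ≠ 0 := (aleph0_pos.trans_le hνinf).ne'
  have hpow : lam ^ ν ≤ Cardinal.powerlt lam κ := le_powerlt _ hνκ
  have hlp : lam ≤ lam ^ ν := self_le_power _ (Cardinal.one_le_iff_ne_zero.2 hν1)
  have h1 : #(PklT κ lam) ≤ Cardinal.lift.{1} (lam ^ ν) := by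
    have hsub := mk_bounded_subset_le (Set.Iio lam.ord) (Cardinal.lift.{1} ν)
    rw [mk_Iio_card_ord, max_eq_left (by simpa using hlam), ← lift_power] at hsub
    refine le_trans (Cardinal.mk_le_of_injective (f := fun x : PklT κ lam =>
      (⟨x.1, x.2.1, ?_⟩ : { t : Set Ordinal.{0} // t ⊆ Set.Iio lam.ord ∧
        #t ≤ Cardinal.lift.{1} ν})) ?_) hsub
    · exact mk_le_lift hκν x
    · intro x y hxy
      exact Subtype.ext (congrArg (fun z => z.1) hxy)
  rw [mk_prod, lift_id, lift_id]
  calc #(PklT κ lam) * #I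
      ≤ Cardinal.lift.{1} (lam ^ ν) * Cardinal.lift.{1} (lam ^ ν) :=
        mul_le_mul' h1 (hI.trans (lift_le.2 ((hνκ.le.trans hkl).trans hlp)))
    _ = Cardinal.lift.{1} (lam ^ ν) := mul_eq_self (aleph0_le_lift.2 (hlam.trans hlp))
    _ ≤ _ := lift_le.2 hpow

/-- Mild ineffability as a compactness principle: for a `P_κ(λ) × I`-indexed family of subsets
`A w` of `P_κ(λ)`, there is a truth assignment `S` each of whose restrictions to fewer than `ρ`
indices is realised by arbitrarily large points of the given cofinal set `D`. It plays the role
of a fine `ρ`-complete ultrafilter concentrating on `D` and measuring every `A w`. -/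
theorem exists_assignment (hκν : κ = Order.succ ν) (hνinf : ℵ₀ ≤ ν) (hkl : κ ≤ lam)
    {ρ : Cardinal.{0}} (hρν : ρ < ν) (hρinf : ℵ₀ ≤ ρ)
    (hm : MildlyIneffable ρ (Cardinal.powerlt lam κ)) {I : Type 1} [Nonempty I]
    (hI : #I ≤ Cardinal.lift.{1} ν) (D : Set (PklT κ lam)) (hD : IsCofinal D)
    (A : PklT κ lam × I → PklT κ lam → Prop) :
    ∃ S : PklT κ lam × I → Prop, ∀ b : Set (PklT κ lam × I), #b < Cardinal.lift.{1} ρ →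
      ∀ x : PklT κ lam, ∃ c ∈ D, x ≤ c ∧ ∀ w ∈ b, (S w ↔ A w c) := by
  classical
  set μ := Cardinal.powerlt lam κ with hμ
  have hle : #(PklT κ lam × I) ≤ #(Set.Iio μ.ord) := by
    rw [mk_Iio_card_ord]; exact mk_PklT_prod_le hκν hνinf hkl hI
  obtain ⟨e⟩ := hle
  have hc : ∀ a ∈ Pkl ρ μ, ∃ c ∈ D, ∀ w : PklT κ lam × I, (e w).1 ∈ a → w.1 ≤ c := by
    intro a ha
    have hJ : #{w : PklT κ lam × I // (e w).1 ∈ a} ≤ Cardinal.lift.{1} ν := by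
      refine le_trans (Cardinal.mk_le_of_injective
        (f := fun w : {w : PklT κ lam × I // (e w).1 ∈ a} => (⟨(e w.1).1, w.2⟩ : a)) ?_)
        (ha.2.le.trans (lift_le.2 hρν.le))
      intro w w' hww
      have : (e w.1).1 = (e w'.1).1 := congrArg (fun z : a => z.1) hww
      exact Subtype.ext (e.injective (Subtype.ext this))
    obtain ⟨x, hx⟩ := exists_upper hκν hνinf hJ (fun w => w.1.1)
    obtain ⟨c, hcD, hxc⟩ := hD x
    exact ⟨c, hcD, fun w hw => (hx ⟨w, hw⟩).trans hxc⟩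
  have : Nonempty (PklT κ lam) := let ⟨c, _, _⟩ := hc ∅ ⟨Set.empty_subset _, by
    simpa using aleph0_pos.trans_le hρinf⟩; ⟨c⟩
  choose! c hcD hcle using hc
  obtain ⟨S, -, hS⟩ := hm (fun a => {o | o ∈ a ∧ ∃ w, (e w).1 = o ∧ A w (c a)})
    (fun a _ o ho => ho.1)
  refine ⟨fun w => (e w).1 ∈ S, fun b hb x => ?_⟩
  obtain ⟨i₀⟩ := ‹Nonempty I›
  -- adding the index `(x, i₀)` to `b` forces the realising point to lie above `x`
  set b' : Set Ordinal.{0} := (fun w => (e w).1) '' (insert (x, i₀) b) with hb'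
  have hb'mem : b' ∈ Pkl ρ μ := by
    refine ⟨?_, ?_⟩
    · rintro _ ⟨w, -, rfl⟩
      exact (e w).2
    · have hρ' : ℵ₀ ≤ Cardinal.lift.{1} ρ := by simpa using hρinf
      exact (mk_image_le.trans (mk_insert_le)).trans_lt
        (add_lt_of_lt hρ' hb (one_lt_aleph0.trans_le hρ'))
  obtain ⟨a, ha, hba, hSa⟩ := hS b' hb'mem
  refine ⟨c a, hcD a ha, hcle a ha (x, i₀) (hba ⟨_, Set.mem_insert _ _, rfl⟩), fun w hw => ?_⟩
  have hwb : (e w).1 ∈ b' := ⟨w, Set.mem_insert_of_mem _ hw, rfl⟩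
  have key := Set.ext_iff.1 hSa (e w).1
  constructor
  · intro h
    obtain ⟨⟨-, w', hw', hA⟩, -⟩ := key.1 ⟨h, hwb⟩
    rwa [← e.injective (Subtype.ext hw')]
  · intro h
    exact (key.2 ⟨⟨hba hwb, w, rfl, h⟩, hwb⟩).1

/-- Two cofinal maps with disjoint ranges: `e₀ x` meets `κ` in an initial segment, `e₁ x` does
not. -/
theorem exists_split (hκν : κ = Order.succ ν) (hνinf : ℵ₀ ≤ ν) (hkl : κ ≤ lam) :
    ∃ e₀ e₁ : PklT κ lam → PklT κ lam, (∀ x, x ≤ e₀ x) ∧ (∀ x, x ≤ e₁ x) ∧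
      ∀ x y, e₀ x ≠ e₁ y := by
  have hνκ : ν < κ := hκν ▸ Order.lt_succ ν
  have hκinf : ℵ₀ ≤ κ := hνinf.trans hνκ.le
  have hκl : κ.ord ≤ lam.ord := ord_le_ord.2 hkl
  have h0 : ∀ x : PklT κ lam, ∃ y : PklT κ lam, x ≤ y ∧
      ∀ α ∈ y.1, α < κ.ord → ∀ β < α, β ∈ y.1 := by
    intro x
    have hxν : #x.1 ≤ Cardinal.lift.{1} ν := mk_le_lift hκν x
    have hκ' : ℵ₀ ≤ Cardinal.lift.{1} κ := by simpa using hκinf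
    let f : x.1 → Set Ordinal.{0} := fun α => {β | β < α.1 ∧ α.1 < κ.ord}
    have hf : ∀ j, #(f j) < Cardinal.lift.{1} κ := by
      intro α
      by_cases hα : α.1 < κ.ord
      · refine (mk_le_mk_of_subset (t := Set.Iio α.1) fun β hβ => hβ.1).trans_lt ?_
        rw [Cardinal.mk_Iio_ordinal]
        exact lift_lt.2 (lt_ord.1 hα)
      · have : f α = ∅ := by
          ext β; simp [f, not_lt.1 hα]
        rw [this]; simpa using aleph0_pos.trans_le hκinf
    refine ⟨⟨x.1 ∪ ⋃ j, f j, Set.union_subset x.2.1 (Set.iUnion_subset ?_), ?_⟩, ?_, ?_⟩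
    · intro α β hβ
      exact (hβ.1.trans hβ.2).trans_le hκl
    · exact (mk_union_le _ _).trans_lt (add_lt_of_lt hκ' x.2.2
        (mk_iUnion_lt_lift hκν hνinf hxν f hf))
    · exact Set.subset_union_left
    · rintro α (hα | hα) hακ β hβ
      · exact Or.inr (Set.mem_iUnion.2 ⟨⟨α, hα⟩, hβ, hακ⟩)
      · obtain ⟨γ, hγ⟩ := Set.mem_iUnion.1 hα
        exact Or.inr (Set.mem_iUnion.2 ⟨γ, hβ.trans hγ.1, hγ.2⟩)
  have h1 : ∀ x : PklT κ lam, ∃ y : PklT κ lam, x ≤ y ∧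
      ∃ α ∈ y.1, α < κ.ord ∧ ∃ β < α, β ∉ y.1 := by
    intro x
    have hκ' : ℵ₀ ≤ Cardinal.lift.{1} κ := by simpa using hκinf
    obtain ⟨δ, hδ, hδx⟩ : ∃ δ, δ < κ.ord ∧ δ ∉ x.1 := by
      by_contra! h
      have := mk_le_mk_of_subset (s := Set.Iio κ.ord) (t := x.1) fun δ hδ => h δ hδ
      rw [mk_Iio_card_ord] at this
      exact absurd x.2.2 (not_lt.2 this)
    have hδ1 : Order.succ δ < κ.ord := (isSuccLimit_ord hκinf).succ_lt hδ
    refine ⟨⟨insert (Order.succ δ) x.1, Set.insert_subset (hδ1.trans_le hκl) x.2.1, ?_⟩,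
      Set.subset_insert _ _, Order.succ δ, Set.mem_insert _ _, hδ1, δ, Order.lt_succ δ, ?_⟩
    · exact mk_insert_le.trans_lt (add_lt_of_lt hκ' x.2.2 (one_lt_aleph0.trans_le hκ'))
    · rintro (h | h)
      · exact absurd h (Order.lt_succ δ).ne
      · exact hδx h
  choose e₀ h0 h0' using h0
  choose e₁ h1 h1' using h1
  refine ⟨e₀, e₁, h0, h1, fun x y hxy => ?_⟩
  obtain ⟨α, hα, hακ, β, hβ, hβn⟩ := h1' y
  rw [← hxy] at hα hβn
  exact hβn (h0' x α hα hακ β hβ)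

/-- The combinatorial core, with the pieces of each partition numbered by ordinals below `ν`:
`F a c` is the number of the piece of the `a`-th partition containing `c`. -/
theorem core (hκν : κ = Order.succ ν) (hνinf : ℵ₀ ≤ ν) (hkl : κ ≤ lam)
    (hνsing : ν.ord.cof < ν) (T : Set Cardinal.{0}) (hT : T ⊆ Set.Iio ν) (hTsup : sSup T = ν)
    (hTmi : ∀ μ ∈ T, (μ : Cardinal.{0}).IsRegular ∧ ℵ₀ < μ ∧
      MildlyIneffable μ (Cardinal.powerlt lam κ))
    (F : PklT κ lam → PklT κ lam → Ordinal.{0}) (hF : ∀ a c, F a c < ν.ord) :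
    ∃ (B : Set (PklT κ lam)) (H : PklT κ lam → Ordinal.{0}), IsCofinal B ∧
      ∀ a ∈ B, ∀ b ∈ B, ∃ t, a ≤ t ∧ b ≤ t ∧ (∃ c, t ≤ c ∧ F a c = H a ∧ F t c = H t) ∧
        ∃ d, t ≤ d ∧ F b d = H b ∧ F t d = H t := by
  classical
  have hν' : ℵ₀ ≤ Cardinal.lift.{1} ν := by simpa using hνinf
  have hνpos : (0 : Ordinal.{0}) < ν.ord := by
    rw [lt_ord]; simpa using aleph0_pos.trans_le hνinf
  have hTex : ∀ x < ν, ∃ ρ ∈ T, x < ρ := by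
    intro x hx
    have hne : T.Nonempty := by
      rw [Set.nonempty_iff_ne_empty]
      rintro rfl
      simp only [csSup_empty, bot_eq_zero'] at hTsup
      exact (aleph0_pos.trans_le hνinf).ne hTsup
    exact exists_lt_of_lt_csSup hne (hTsup ▸ hx)
  -- a cofinal set `C` of indices below `ν`, of size `cof ν`
  obtain ⟨C, hC, hCcard⟩ := Order.exists_cof_eq (Set.Iio ν.ord)
  rw [Ordinal.cof_Iio, ← Ordinal.lift_cof] at hCcard
  have hCν : #C ≤ Cardinal.lift.{1} ν := hCcard ▸ lift_le.2 hνsing.le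
  have hCne : Nonempty C := by
    obtain ⟨i, hi, -⟩ := hC ⟨0, hνpos⟩
    exact ⟨⟨i, hi⟩⟩
  -- first application: a bound `i x ∈ C` for the colours `F x c`, for coherently many `c`
  obtain ⟨ρ₀, hρ₀T, hρ₀⟩ := hTex _ hνsing
  obtain ⟨S, hS⟩ := exists_assignment hκν hνinf hkl (hT hρ₀T) (hTmi ρ₀ hρ₀T).2.1.le
    (hTmi ρ₀ hρ₀T).2.2 hCν Set.univ (fun x => ⟨x, trivial, le_rfl⟩)
    (fun w c => F w.1 c ≤ w.2.1.1)
  have hi : ∀ x : PklT κ lam, ∃ i : C, S (x, i) := by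
    intro x
    have hb : #(Set.range fun i : C => (x, i)) < Cardinal.lift.{1} ρ₀ :=
      mk_range_le.trans_lt (hCcard ▸ lift_lt.2 hρ₀)
    obtain ⟨c, -, -, hc⟩ := hS _ hb x
    obtain ⟨i, hiC, hle⟩ := hC ⟨F x c, hF x c⟩
    exact ⟨⟨i, hiC⟩, (hc _ ⟨⟨i, hiC⟩, rfl⟩).2 hle⟩
  choose i hi using hi
  obtain ⟨e₀, e₁, he₀, he₁, hne⟩ := exists_split (lam := lam) hκν hνinf hkl
  have hCC : #(C × C) ≤ Cardinal.lift.{1} ν := by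
    rw [mk_prod, lift_id]
    exact (mul_le_mul' hCν hCν).trans_eq (mul_eq_self hν')
  obtain ⟨⟨j₀, j₁⟩, hA⟩ := pigeonhole hκν hνinf hCC Set.univ (fun x => ⟨x, trivial, le_rfl⟩)
    (fun x : PklT κ lam => (i (e₀ x), i (e₁ x)))
  set A := {x : PklT κ lam | x ∈ Set.univ ∧ (i (e₀ x), i (e₁ x)) = (j₀, j₁)} with hAdef
  have hD : IsCofinal (e₀ '' A) := fun x => by
    obtain ⟨y, hy, hxy⟩ := hA x
    exact ⟨_, ⟨y, hy, rfl⟩, hxy.trans (he₀ y)⟩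
  have hE : IsCofinal (e₁ '' A) := fun x => by
    obtain ⟨y, hy, hxy⟩ := hA x
    exact ⟨_, ⟨y, hy, rfl⟩, hxy.trans (he₁ y)⟩
  obtain ⟨m, hm₀, hm₁, hmν⟩ : ∃ m : Ordinal.{0}, j₀.1.1 ≤ m ∧ j₁.1.1 ≤ m ∧ m < ν.ord :=
    ⟨max j₀.1.1 j₁.1.1, le_max_left _ _, le_max_right _ _, max_lt j₀.1.2 j₁.1.2⟩
  have hpair : ∀ a t : PklT κ lam, ∃ c, a ∈ e₁ '' A → t ∈ e₀ '' A →
      t ≤ c ∧ F a c ≤ m ∧ F t c ≤ m := by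
    intro a t
    by_cases h : a ∈ e₁ '' A ∧ t ∈ e₀ '' A
    · obtain ⟨⟨x, hx, rfl⟩, ⟨y, hy, rfl⟩⟩ := h
      have hb : #({(e₁ x, i (e₁ x)), (e₀ y, i (e₀ y))} : Set (PklT κ lam × C)) <
          Cardinal.lift.{1} ρ₀ := by
        refine lt_of_lt_of_le ?_ (show ℵ₀ ≤ Cardinal.lift.{1} ρ₀ by
          simpa using (hTmi ρ₀ hρ₀T).2.1.le)
        exact (Set.toFinite _).lt_aleph0
      obtain ⟨c, -, hyc, hc⟩ := hS _ hb (e₀ y)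
      refine ⟨c, fun _ _ => ⟨hyc, ?_, ?_⟩⟩
      · have := (hc (e₁ x, i (e₁ x)) (by simp)).1 (hi _)
        rw [show i (e₁ x) = j₁ from (Prod.ext_iff.1 hx.2).2] at this
        exact this.trans hm₁
      · have := (hc (e₀ y, i (e₀ y)) (by simp)).1 (hi _)
        rw [show i (e₀ y) = j₀ from (Prod.ext_iff.1 hy.2).1] at this
        exact this.trans hm₀
    · exact ⟨a, fun h1 h2 => absurd ⟨h1, h2⟩ h⟩
  choose c hc using hpair
  -- second application, with `ρ` above the common bound `m`: for each `a`, the pair of colours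
  -- `(F a (c a t), F t (c a t))` is the same for coherently many `t`
  obtain ⟨ρ, hρT, hρ⟩ := hTex _ (lt_ord.1 hmν)
  obtain ⟨-, hρinf, hρmi⟩ := hTmi ρ hρT
  have hρ' : ℵ₀ ≤ Cardinal.lift.{1} ρ := by simpa using hρinf.le
  have hI0 : #(Set.Iic m) < Cardinal.lift.{1} ρ := by
    rw [← Order.Iio_succ, Cardinal.mk_Iio_ordinal]
    exact lift_lt.2 (lt_ord.1 ((isSuccLimit_ord hρinf.le).succ_lt (lt_ord.2 hρ)))
  have hI : #(Set.Iic m × Set.Iic m) < Cardinal.lift.{1} ρ := by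
    rw [mk_prod, lift_id]
    exact mul_lt_of_lt hρ' hI0 hI0
  have hρν : Cardinal.lift.{1} ρ ≤ Cardinal.lift.{1} ν := lift_le.2 (hT hρT).le
  have : Nonempty (Set.Iic m × Set.Iic m) := ⟨(⟨m, Set.self_mem_Iic⟩, ⟨m, Set.self_mem_Iic⟩)⟩
  obtain ⟨S', hS'⟩ := exists_assignment hκν hνinf hkl (hT hρT) hρinf.le hρmi (hI.le.trans hρν)
    (e₀ '' A) hD (fun w t => F w.1 (c w.1 t) = w.2.1.1 ∧ F t (c w.1 t) = w.2.2.1)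
  have hp : ∀ a : PklT κ lam, ∃ p : Set.Iic m × Set.Iic m, a ∈ e₁ '' A → S' (a, p) := by
    intro a
    by_cases ha : a ∈ e₁ '' A
    · have hb : #(Set.range fun p : Set.Iic m × Set.Iic m => (a, p)) < Cardinal.lift.{1} ρ :=
        mk_range_le.trans_lt hI
      obtain ⟨t, htD, -, ht⟩ := hS' _ hb a
      obtain ⟨-, h1, h2⟩ := hc a t ha htD
      exact ⟨(⟨_, h1⟩, ⟨_, h2⟩), fun _ => (ht _ ⟨(⟨_, h1⟩, ⟨_, h2⟩), rfl⟩).2 ⟨rfl, rfl⟩⟩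
    · exact ⟨Classical.arbitrary _, fun h => absurd h ha⟩
  choose p hp using hp
  obtain ⟨η, hB⟩ := pigeonhole hκν hνinf (hI0.le.trans hρν) (e₁ '' A) hE (fun a => (p a).2)
  -- since `t` ranges over `e₀ '' A`, which is disjoint from `e₁ '' A`, its value can be `η`
  refine ⟨_, fun x => if x ∈ e₁ '' A then (p x).1.1 else η.1, hB, ?_⟩
  rintro a ⟨ha, haη⟩ b ⟨hb, hbη⟩
  obtain ⟨u, hu⟩ := exists_upper hκν hνinf (J := ULift.{1} Bool)
    ((mk_lt_aleph0).le.trans hν') (fun k => if k.down then a else b)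
  have hau : a ≤ u := by simpa using hu ⟨true⟩
  have hbu : b ≤ u := by simpa using hu ⟨false⟩
  have hfin : #({(a, p a), (b, p b)} : Set (PklT κ lam × (Set.Iic m × Set.Iic m))) <
      Cardinal.lift.{1} ρ := ((Set.toFinite _).lt_aleph0).trans_le hρ'
  obtain ⟨t, htD, hut, ht⟩ := hS' _ hfin u
  have htE : t ∉ e₁ '' A := by
    rintro ⟨y, -, hy⟩
    obtain ⟨x, -, hx⟩ := htD
    exact hne x y (hx.trans hy.symm)
  have h1 := (ht (a, p a) (by simp)).1 (hp a ha)
  have h2 := (ht (b, p b) (by simp)).1 (hp b hb)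
  refine ⟨t, hau.trans hut, hbu.trans hut, ⟨c a t, (hc a t ha htD).1, ?_, ?_⟩,
    ⟨c b t, (hc b t hb htD).1, ?_, ?_⟩⟩
  · exact h1.1.trans (if_pos ha).symm
  · exact h1.2.trans ((congrArg Subtype.val haη).trans (if_neg htE).symm)
  · exact h2.1.trans (if_pos hb).symm
  · exact h2.2.trans ((congrArg Subtype.val hbη).trans (if_neg htE).symm)

end PieceSelection

/-- if `κ = ν⁺` where `ν` is a singular limit of mildly
`λ^{<κ}`-ineffable cardinals, then `PS(κ, κ, λ)` holds. -/
theorem stmt10 (κ lam ν : Cardinal.{0}) (hreg : κ.IsRegular) (hunc : ℵ₀ < κ)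
    (hkl : κ ≤ lam) (hκν : κ = Order.succ ν) (hνinf : ℵ₀ ≤ ν)
    (hνsing : ν.ord.cof < ν)
    (T : Set Cardinal.{0}) (hT : T ⊆ Set.Iio ν) (hTsup : sSup T = ν)
    (hTmi : ∀ μ ∈ T, (μ : Cardinal.{0}).IsRegular ∧ ℵ₀ < μ ∧
      MildlyIneffable μ (Cardinal.powerlt lam κ)) :
    PSpr κ κ lam := by
  classical
  intro Q hQ
  have hnum : ∀ a : PieceSelection.PklT κ lam,
      ∃ g : Set (Set Ordinal.{0}) → Ordinal.{0}, (∀ A ∈ Q a.1, g A < ν.ord) ∧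
        Set.InjOn g (Q a.1) := by
    intro a
    have hle : #(Q a.1) ≤ #(Set.Iio ν.ord) := by
      have := (hQ a.1 a.2).2
      rwa [PieceSelection.mk_Iio_card_ord, ← Order.lt_succ_iff, ← lift_succ, ← hκν]
    obtain ⟨e⟩ := hle
    refine ⟨fun A => if h : A ∈ Q a.1 then (e ⟨A, h⟩).1 else 0, fun A hA => ?_, ?_⟩
    · simp only [dif_pos hA]; exact (e ⟨A, hA⟩).2
    · intro A hA B hB hAB
      simp only [dif_pos hA, dif_pos hB] at hAB
      exact congrArg Subtype.val (e.injective (Subtype.ext hAB))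
  choose g hg hginj using hnum
  have hpiece : ∀ a c : PieceSelection.PklT κ lam, ∃ A ∈ Q a.1, c.1 ∈ A := by
    intro a c
    have : c.1 ∈ ⋃₀ Q a.1 := by rw [(hQ a.1 a.2).1.2.2.2]; exact c.2
    exact this
  choose A hAQ hcA using hpiece
  obtain ⟨B, H, hB, hBH⟩ := PieceSelection.core hκν hνinf hkl hνsing T hT hTsup hTmi
    (fun a c => g a (A a c)) (fun a c => hg a _ (hAQ a c))
  -- the piece of the `x`-th partition numbered `H x`, or any piece if there is none
  have hh : ∀ x : Set Ordinal.{0}, ∃ Y, ∀ hx : x ∈ Pkl κ lam, Y ∈ Q x ∧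
      ∀ c, g ⟨x, hx⟩ (A ⟨x, hx⟩ c) = H ⟨x, hx⟩ → c.1 ∈ Y := by
    intro x
    by_cases hx : x ∈ Pkl κ lam
    · by_cases hex : ∃ c, g ⟨x, hx⟩ (A ⟨x, hx⟩ c) = H ⟨x, hx⟩
      · obtain ⟨c, hc⟩ := hex
        refine ⟨A ⟨x, hx⟩ c, fun _ => ⟨hAQ ⟨x, hx⟩ c, fun d hd => ?_⟩⟩
        rw [← hginj ⟨x, hx⟩ (hAQ ⟨x, hx⟩ d) (hAQ ⟨x, hx⟩ c) (hd.trans hc.symm)]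
        exact hcA _ _
      · exact ⟨A ⟨x, hx⟩ ⟨x, hx⟩, fun _ => ⟨hAQ ⟨x, hx⟩ ⟨x, hx⟩,
          fun d hd => absurd ⟨d, hd⟩ hex⟩⟩
    · exact ⟨∅, fun h => absurd h hx⟩
  choose h hh using hh
  refine ⟨Subtype.val '' B, ⟨?_, ?_⟩, h, fun a ha => (hh a ha).1, ?_⟩
  · rintro _ ⟨b, -, rfl⟩
    exact b.2
  · rintro ⟨-, a, ha, hno⟩
    obtain ⟨b, hb, hab⟩ := hB ⟨a, ha⟩
    exact hno b.1 ⟨b, hb, rfl⟩ hab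
  · rintro _ ⟨a, ha, rfl⟩ _ ⟨b, hb, rfl⟩
    obtain ⟨t, hat, hbt, ⟨c, htc, hc1, hc2⟩, d, htd, hd1, hd2⟩ := hBH a ha b hb
    exact ⟨t.1, t.2, Set.union_subset hat hbt,
      ⟨c.1, (hh a.1 a.2).2 c hc1, (hh t.1 t.2).2 c hc2, htc⟩,
      ⟨d.1, (hh b.1 b.2).2 d hd1, (hh t.1 t.2).2 d hd2, htd⟩⟩
end
end

section
/- Let κ be a regular uncountable cardinal, λ ≥ κ, and J a fine ideal on P_κ(λ). Then J^+ →_J (J^+, ω)² holds: for every F : P_κ(λ) × P_κ(λ) → 2 and every A ∈ J^+, either there is B ∈ J^+ with B ⊆ A such that {b ∈ B : F(a,b) ≠ 0} ∈ J for every a ∈ B, or there is a ⊂-increasing sequence ⟨c_i : i < ω⟩ of elements of A such that F(c_i, c_j) = 1 whenever i < j < ω. -/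
/-!
If no positive `B ⊆ A` satisfies the first alternative, then every positive `B ⊆ A` has a point
`a ∈ B` with `{b ∈ B : F(a, b) ≠ 0}` positive. By fineness, only a `J`-small set of `b` fails
`a ⊂ b` (`not_ssubset_mem`), so `{b ∈ B : F(a, b) ≠ 0, a ⊂ b}` is still positive. Iterating this
shrinking `ω` times from `A` gives a decreasing sequence of positive sets, and the chosen points
form the required chain.
-/


set_option autoImplicit false

noncomputable section

open Cardinal Set

universe u

/-- Over a fine family `J`, `J`-almost every `b` properly contains a given `a ∈ P_κ(λ)`: adjoin to
`a` some ordinal of `λ` outside it, which exists because `|a| < κ ≤ λ`. -/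
lemma not_ssubset_mem {κ lam : Cardinal.{0}} (hunc : ℵ₀ < κ) (hkl : κ ≤ lam)
    {J : Set (Set (Set Ordinal.{0}))} (hfine : Ikl κ lam ⊆ J)
    {a : Set Ordinal.{0}} (ha : a ∈ Pkl κ lam) :
    {b | b ∈ Pkl κ lam ∧ ¬a ⊂ b} ∈ J := by
  obtain ⟨x, hxl, hxa⟩ : ∃ x ∈ Set.Iio lam.ord, x ∉ a := by
    by_contra! h
    have h1 : #(Set.Iio lam.ord) ≤ #a := Cardinal.mk_le_mk_of_subset h
    rw [Cardinal.mk_Iio_ordinal, Cardinal.card_ord] at h1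
    exact absurd (h1.trans_lt ha.2) (not_lt.mpr (Cardinal.lift_le.mpr hkl))
  refine hfine ⟨fun b hb => hb.1, insert x a, ⟨Set.insert_subset hxl ha.1, ?_⟩, ?_⟩
  · have hinf : ℵ₀ ≤ Cardinal.lift.{1} κ := Cardinal.aleph0_le_lift.mpr hunc.le
    exact Cardinal.mk_insert_le.trans_lt
      (Cardinal.add_lt_of_lt hinf ha.2 (Cardinal.one_lt_aleph0.trans_le hinf))
  · rintro b ⟨-, hb⟩ hsub
    exact hb ⟨(Set.subset_insert x a).trans hsub,
      fun h => hxa (h (hsub (Set.mem_insert x a)))⟩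

/-- for any fine ideal `J` on `P_κ(λ)`, `J⁺ →_J (J⁺, ω)²`
holds. -/
theorem stmt11 (κ lam : Cardinal.{0}) (hreg : κ.IsRegular) (hunc : ℵ₀ < κ)
    (hkl : κ ≤ lam)
    (J : Set (Set (Set Ordinal.{0}))) (hJ : IsIdealOn J (Pkl κ lam))
    (hfine : Ikl κ lam ⊆ J)
    (F : Set Ordinal.{0} → Set Ordinal.{0} → Fin 2) (A : Set (Set Ordinal.{0}))
    (hA : A ∈ plusOf J (Pkl κ lam)) :
    (∃ B ∈ plusOf J (Pkl κ lam), B ⊆ A ∧ ∀ a ∈ B, {b | b ∈ B ∧ F a b ≠ 0} ∈ J) ∨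
    (∃ c : ℕ → Set Ordinal.{0}, (∀ i, c i ∈ A) ∧ (∀ i j : ℕ, i < j → c i ⊂ c j) ∧
      ∀ i j : ℕ, i < j → F (c i) (c j) = 1) := by
  rw [or_iff_not_imp_left]
  intro hno
  have step : ∀ B : {B // B ∈ plusOf J (Pkl κ lam) ∧ B ⊆ A}, ∃ a ∈ B.1,
      {b | b ∈ B.1 ∧ F a b ≠ 0 ∧ a ⊂ b} ∈ plusOf J (Pkl κ lam) := by
    rintro ⟨B, hB, hBA⟩
    by_contra! h
    refine hno ⟨B, hB, hBA, fun a ha => ?_⟩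
    have hsmall : {b | b ∈ B ∧ F a b ≠ 0 ∧ a ⊂ b} ∈ J := by
      by_contra hn
      exact h a ha ⟨fun b hb => hB.1 hb.1, hn⟩
    refine hJ.mem_of_subset _
      (hJ.union_mem _ hsmall _ (not_ssubset_mem hunc hkl hfine (hB.1 ha))) _ ?_
    rintro b ⟨hb, hF⟩
    by_cases hab : a ⊂ b
    · exact Or.inl ⟨hb, hF, hab⟩
    · exact Or.inr ⟨hB.1 hb, hab⟩
  choose p hp hpos using step
  let next : {B // B ∈ plusOf J (Pkl κ lam) ∧ B ⊆ A} →
      {B // B ∈ plusOf J (Pkl κ lam) ∧ B ⊆ A} :=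
    fun B => ⟨_, hpos B, fun _ hb => B.2.2 hb.1⟩
  let S : ℕ → {B // B ∈ plusOf J (Pkl κ lam) ∧ B ⊆ A} :=
    fun n => Nat.rec ⟨A, hA, subset_rfl⟩ (fun _ B => next B) n
  have hanti : Antitone fun n => (S n).1 :=
    antitone_nat_of_succ_le fun n b hb => hb.1
  have key : ∀ i j, i < j → F (p (S i)) (p (S j)) ≠ 0 ∧ p (S i) ⊂ p (S j) := by
    intro i j hij
    have hmem : p (S j) ∈ (S (i + 1)).1 := hanti hij (hp (S j))
    exact hmem.2
  exact ⟨fun n => p (S n), fun i => (S i).2.2 (hp _), fun i j hij => (key i j hij).2,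
    fun i j hij => Fin.eq_one_of_ne_zero _ (key i j hij).1⟩
end
end

section
/- Let J be a (θ,2)-distributive ideal on a set X, where θ is an infinite cardinal. Then J is (θ,θ)-distributive. -/
/-!
Given `θ` many families `Q i`, each of size at most `θ`, their union has at most `θ` members. Each
member `E` yields the two-piece family `{E, X \ E}` (positive pieces only, `splitFam`), so
`(θ, 2)`-distributivity provides a positive `B ⊆ A` that is decided by every such `E`: either
`B \ E ∈ J` or `B ∩ E ∈ J`. By maximality of `Q i`, some `E ∈ Q i` has `E ∩ B ∉ J`; for this `E`
the first alternative must hold, so `E` can serve as the value of the selector at `i`.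
-/

set_option autoImplicit false

noncomputable section

open Cardinal Set

universe u

/-- The partition of `X` into `e ∩ X` and `X \ e`, with pieces belonging to `J` discarded. Thus it is
a maximal almost disjoint family even when `e` or its complement is null. -/
def splitFam {α : Type u} (J : Set (Set α)) (X e : Set α) : Set (Set α) :=
  {Y | Y ∈ plusOf J X ∧ (Y = e ∩ X ∨ Y = X \ e)}

theorem splitFam_mad {α : Type u} {J : Set (Set α)} {X : Set α} (hJ : IsIdealOn J X)
    (e : Set α) : MADOn J X (splitFam J X e) := by
  refine ⟨fun Y hY => hY.1, ?_, ?_⟩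
  · rintro A ⟨-, hA⟩ B ⟨-, hB⟩ hne
    have : A ∩ B = ∅ := by
      rcases hA with rfl | rfl <;> rcases hB with rfl | rfl
      · exact absurd rfl hne
      · ext x; simp; tauto
      · ext x; simp; tauto
      · exact absurd rfl hne
    rw [this]; exact hJ.empty_mem
  · rintro C ⟨hCX, hC⟩
    -- one of the two halves of `C` is positive, hence so is the member of the family containing it
    by_cases h1 : (e ∩ X) ∩ C ∈ J
    · have h2 : (X \ e) ∩ C ∉ J := by
        intro h2
        refine hC (hJ.mem_of_subset _ (hJ.union_mem _ h1 _ h2) _ fun x hx => ?_)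
        have := hCX hx
        by_cases hxe : x ∈ e
        · exact Or.inl ⟨⟨hxe, this⟩, hx⟩
        · exact Or.inr ⟨⟨this, hxe⟩, hx⟩
      exact ⟨_, ⟨⟨sdiff_subset, fun h => h2 (hJ.mem_of_subset _ h _ inter_subset_left)⟩,
        Or.inr rfl⟩, h2⟩
    · exact ⟨_, ⟨⟨inter_subset_right, fun h => h1 (hJ.mem_of_subset _ h _ inter_subset_left)⟩,
        Or.inl rfl⟩, h1⟩

theorem splitFam_card {α : Type u} (J : Set (Set α)) (X e : Set α) :
    #(splitFam J X e) ≤ 2 := by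
  have h : splitFam J X e ⊆ {e ∩ X, X \ e} := fun Y hY => hY.2
  refine (mk_le_mk_of_subset h).trans ?_
  refine mk_insert_le.trans ?_
  rw [mk_singleton, one_add_one_eq_two]

/-- At most `θ` sets can be listed by the ordinals below `θ.ord`. -/
theorem exists_listing {α : Type u} (S : Set (Set α)) (θ : Cardinal.{u}) (hS : #S ≤ θ) :
    ∃ e : Ordinal.{u} → Set α, ∀ A ∈ S, ∃ i < θ.ord, e i = A := by
  have hle : Cardinal.lift.{u + 1} #S ≤ Cardinal.lift.{u} #(Set.Iio θ.ord) := by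
    rw [mk_Iio_ordinal, card_ord, lift_id'.{u, u + 1}]
    exact lift_le.2 hS
  obtain ⟨g⟩ := lift_mk_le'.1 hle
  refine ⟨Function.extend (fun s => (g s : Ordinal.{u})) Subtype.val (fun _ => ∅), ?_⟩
  intro A hA
  have hg : Function.Injective (fun s => (g s : Ordinal.{u})) :=
    Subtype.val_injective.comp g.injective
  exact ⟨g ⟨A, hA⟩, (g ⟨A, hA⟩).2, hg.extend_apply _ _ ⟨A, hA⟩⟩

/-- a `(θ, 2)`-distributive ideal is `(θ, θ)`-distributive. -/
theorem stmt12 {α : Type u} (X : Set α) (J : Set (Set α)) (hJ : IsIdealOn J X)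
    (θ : Cardinal.{u}) (hθ : ℵ₀ ≤ θ) (h : DistrU J X θ 2) : DistrU J X θ θ := by
  intro A hA Q hQ
  have hS : #(⋃ i ∈ Set.Iio θ.ord, Q i : Set (Set α)) ≤ θ := by
    exact mk_biUnion_le_of_le (card_ord θ).le hθ _ fun i hi => (hQ i hi).2
  obtain ⟨e, he⟩ := exists_listing _ θ hS
  obtain ⟨B, hB, hBA, k, hk, hBk⟩ := h A hA (fun i => splitFam J X (e i))
    fun i _ => ⟨splitFam_mad hJ _, splitFam_card J X _⟩
  have key : ∀ i, ∃ E, i < θ.ord → E ∈ Q i ∧ B \ E ∈ J := by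
    intro i
    by_cases hi : i < θ.ord
    · obtain ⟨E, hE, hEB⟩ := (hQ i hi).1.2.2 B hB
      obtain ⟨j, hj, rfl⟩ := he E (mem_biUnion (show i ∈ Set.Iio θ.ord from hi) hE)
      refine ⟨e j, fun _ => ⟨hE, ?_⟩⟩
      have hBj := hBk j hj
      rcases (hk j hj).2 with h' | h' <;> rw [h'] at hBj
      · exact hJ.mem_of_subset _ hBj _ fun x hx => ⟨hx.1, fun hx' => hx.2 hx'.1⟩
      · exact absurd (hJ.mem_of_subset _ hBj _ fun x hx => ⟨hx.2, fun hx' => hx'.2 hx.1⟩) hEB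
    · exact ⟨∅, fun h' => absurd h' hi⟩
  choose f hf using key
  exact ⟨B, hB, hBA, f, fun i hi => (hf i hi).1, fun i hi => (hf i hi).2⟩
end
end
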